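/- arXiv:0707.0939 — 2 statements merged into one kernel-verified Lean document; each statement's English description precedes it below -/
import Mathlib

section
/- An almost quaternion-Hermitian manifold M of dimension 4n ≥ 8 is QKT if and only if for each local adapted basis I,J,K there are local one-forms γ_I, γ_J, γ_K such that β_J − β_I = I dω_I − J dω_J = I(Kγ_K) ∧ ω_I − J(Kγ_K) ∧ ω_J + Kγ_K^− ∧ ω_K, where γ_K^− = Iγ_I − Jγ_J, together with the equations obtained by cyclic permutation of (I,J,K). In this case the skew-symmetric torsion three-form T satisfies 2T = 2(I dω_I + J(Kγ_K) ∧ ω_J + K(Jγ_J) ∧ ω_K) = β_I + J(Iγ_I) ∧ ω_J + K(Iγ_I) ∧ ω_K + Iγ_I^+ ∧ ω_I (and cyclically), where γ_I^+ = Jγ_J + Kγ_K, and the one-forms γ_A are given by 2(n−1) Iγ_I = (Λ_J + IΛ_K) dω_J = (Λ_K − IΛ_J) dω_K (and cyclically). -/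
/-!  Synthetic (Koszul-style) model of an almost quaternion-Hermitian `4n`-manifold.

`C` plays the role of the commutative ℝ-algebra of smooth functions and `V` that of
the `C`-module of vector fields, equipped with a directional derivative `D`, a Lie
bracket, a Riemannian metric `g` together with its Levi-Civita connection `nab`
(characterised by being torsion-free and metric), a local adapted basis `I, J, K`
of anticommuting almost complex structures with `K = I J`, each compatible with the
metric, and a (local) orthonormal frame.  -/

noncomputable section

open scoped BigOperators

structure AQH (n : ℕ) (C : Type*) (V : Type*) [CommRing C] [Algebra ℝ C]
    [AddCommGroup V] [Module C V] where
  /-- derivative of a function along a vector field -/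
  D : V → C → C
  D_add : ∀ X f g, D X (f + g) = D X f + D X g
  D_mul : ∀ X f g, D X (f * g) = f * D X g + g * D X f
  D_const : ∀ X (r : ℝ), D X (algebraMap ℝ C r) = 0
  D_addX : ∀ X Y f, D (X + Y) f = D X f + D Y f
  D_smulX : ∀ (f : C) (X : V) (h : C), D (f • X) h = f * D X h
  /-- the Lie bracket of vector fields -/
  bracket : V → V → V
  bracket_skew : ∀ X Y, bracket X Y = -bracket Y X
  bracket_add : ∀ X Y Z, bracket X (Y + Z) = bracket X Y + bracket X Z
  bracket_smul : ∀ X (f : C) Y, bracket X (f • Y) = f • bracket X Y + (D X f) • Y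
  bracket_jacobi : ∀ X Y Z,
    bracket X (bracket Y Z) + bracket Y (bracket Z X) + bracket Z (bracket X Y) = 0
  D_bracket : ∀ X Y f, D (bracket X Y) f = D X (D Y f) - D Y (D X f)
  /-- the Riemannian metric -/
  g : V → V → C
  g_symm : ∀ X Y, g X Y = g Y X
  g_add : ∀ X Y Z, g (X + Y) Z = g X Z + g Y Z
  g_smul : ∀ (f : C) X Y, g (f • X) Y = f * g X Y
  /-- the Levi-Civita connection -/
  nab : V → V → V
  nab_addX : ∀ X Y Z, nab (X + Y) Z = nab X Z + nab Y Z
  nab_smulX : ∀ (f : C) X Y, nab (f • X) Y = f • nab X Y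
  nab_add : ∀ X Y Z, nab X (Y + Z) = nab X Y + nab X Z
  nab_leibniz : ∀ X (f : C) Y, nab X (f • Y) = f • nab X Y + (D X f) • Y
  torsion_free : ∀ X Y, nab X Y - nab Y X = bracket X Y
  nab_metric : ∀ X Y Z, D X (g Y Z) = g (nab X Y) Z + g Y (nab X Z)
  /-- the (local) adapted basis of almost complex structures -/
  I : V → V
  J : V → V
  K : V → V
  I_lin : ∀ (f : C) X Y, I (f • X + Y) = f • I X + I Y
  J_lin : ∀ (f : C) X Y, J (f • X + Y) = f • J X + J Y
  K_lin : ∀ (f : C) X Y, K (f • X + Y) = f • K X + K Y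
  I_sq : ∀ X, I (I X) = -X
  J_sq : ∀ X, J (J X) = -X
  K_def : ∀ X, K X = I (J X)
  anticomm : ∀ X, I (J X) = -J (I X)
  I_metric : ∀ X Y, g (I X) (I Y) = g X Y
  J_metric : ∀ X Y, g (J X) (J Y) = g X Y
  /-- a (local) orthonormal frame -/
  frame : Fin (4 * n) → V
  frame_orthonormal : ∀ i j, g (frame i) (frame j) = if i = j then 1 else 0
  frame_span : ∀ X, X = ∑ i, g X (frame i) • frame i

namespace AQH

section ops

variable {C V : Type*} [CommRing C]

/-- the operator `A_(1)` on covariant 3-tensors -/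
def op1 (A : V → V) (ψ : V → V → V → C) : V → V → V → C := fun X Y Z => -ψ (A X) Y Z

/-- the operator `A_(2)` on covariant 3-tensors -/
def op2 (A : V → V) (ψ : V → V → V → C) : V → V → V → C := fun X Y Z => -ψ X (A Y) Z

/-- the operator `A_(3)` on covariant 3-tensors -/
def op3 (A : V → V) (ψ : V → V → V → C) : V → V → V → C := fun X Y Z => -ψ X Y (A Z)

/-- the operator `A_(12) = A_(1) A_(2)` on covariant 3-tensors -/
def op12 (A : V → V) (ψ : V → V → V → C) : V → V → V → C := fun X Y Z => ψ (A X) (A Y) Z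

/-- the operator `A_(13) = A_(1) A_(3)` on covariant 3-tensors -/
def op13 (A : V → V) (ψ : V → V → V → C) : V → V → V → C := fun X Y Z => ψ (A X) Y (A Z)

/-- the operator `A_(23) = A_(2) A_(3)` on covariant 3-tensors -/
def op23 (A : V → V) (ψ : V → V → V → C) : V → V → V → C := fun X Y Z => ψ X (A Y) (A Z)

/-- the operator `𝓛_A = A_(12) + A_(13) + A_(23)` on three-forms -/
def calL (A : V → V) (ψ : V → V → V → C) : V → V → V → C :=
  fun X Y Z => op12 A ψ X Y Z + op13 A ψ X Y Z + op23 A ψ X Y Z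

/-- the action `(A ν)(X) = -ν (A X)` of `A` on a one-form -/
def act1 (A : V → V) (ν : V → C) : V → C := fun X => -ν (A X)

/-- the action `(A ψ)(X,Y,Z) = -ψ(AX,AY,AZ)` of `A` on a three-form -/
def act3 (A : V → V) (ψ : V → V → V → C) : V → V → V → C :=
  fun X Y Z => -ψ (A X) (A Y) (A Z)

/-- wedge product of two one-forms -/
def wedge11 (α β : V → C) : V → V → C := fun X Y => α X * β Y - α Y * β X

/-- wedge product of a one-form and a two-form -/
def wedge12 (ν : V → C) (ω : V → V → C) : V → V → V → C :=
  fun X Y Z => ν X * ω Y Z - ν Y * ω X Z + ν Z * ω X Y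

/-- wedge product of two two-forms -/
def wedge22 (α β : V → V → C) : V → V → V → V → C := fun X Y Z W =>
  α X Y * β Z W - α X Z * β Y W + α X W * β Y Z
    + α Z W * β X Y - α Y W * β X Z + α Y Z * β X W

/-- a (0,3)-tensor is an alternating three-form -/
def IsAlt3 (T : V → V → V → C) : Prop :=
  (∀ X Y Z, T Y X Z = -T X Y Z) ∧ (∀ X Y Z, T X Z Y = -T X Y Z)

variable [AddCommGroup V] [Module C V]

/-- `C`-linearity (tensoriality) of a three-form in its first argument -/
def Lin3 (T : V → V → V → C) : Prop :=
  ∀ (f : C) X X' Y Z, T (f • X + X') Y Z = f * T X Y Z + T X' Y Z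

/-- `C`-linearity (tensoriality) of a one-form -/
def Lin1 (ν : V → C) : Prop := ∀ (f : C) X X', ν (f • X + X') = f * ν X + ν X'

end ops

section derived

variable {n : ℕ} {C V : Type*} [CommRing C] [Algebra ℝ C] [AddCommGroup V] [Module C V]
  [Module ℝ V] [IsScalarTower ℝ C V]

variable (M : AQH n C V)

/-- the Kähler form `ω_A(X,Y) = g(X, A Y)` -/
def omega (A : V → V) : V → V → C := fun X Y => M.g X (A Y)

/-- `(∇_X A) Y` -/
def nabA (A : V → V) : V → V → V := fun X Y => M.nab X (A Y) - A (M.nab X Y)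

/-- covariant derivative of a 2-form: `(∇_X ψ)(Y,Z)` -/
def nab2 (ψ : V → V → C) : V → V → V → C :=
  fun X Y Z => M.D X (ψ Y Z) - ψ (M.nab X Y) Z - ψ Y (M.nab X Z)

/-- covariant derivative of a 4-form -/
def nab4 (ψ : V → V → V → V → C) : V → V → V → V → V → C :=
  fun X Y Z W U => M.D X (ψ Y Z W U) - ψ (M.nab X Y) Z W U - ψ Y (M.nab X Z) W U
    - ψ Y Z (M.nab X W) U - ψ Y Z W (M.nab X U)

/-- exterior derivative of a one-form -/
def d1 (ν : V → C) : V → V → C :=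
  fun X Y => M.D X (ν Y) - M.D Y (ν X) - ν (M.bracket X Y)

/-- exterior derivative of a two-form -/
def d2 (ψ : V → V → C) : V → V → V → C :=
  fun X Y Z => M.D X (ψ Y Z) - M.D Y (ψ X Z) + M.D Z (ψ X Y)
    - ψ (M.bracket X Y) Z + ψ (M.bracket X Z) Y - ψ (M.bracket Y Z) X

/-- exterior derivative of a four-form -/
def d4 (ψ : V → V → V → V → C) : V → V → V → V → V → C := fun X Y Z W U =>
  M.D X (ψ Y Z W U) - M.D Y (ψ X Z W U) + M.D Z (ψ X Y W U) - M.D W (ψ X Y Z U)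
      + M.D U (ψ X Y Z W)
    - ψ (M.bracket X Y) Z W U + ψ (M.bracket X Z) Y W U - ψ (M.bracket X W) Y Z U
      + ψ (M.bracket X U) Y Z W
    - ψ (M.bracket Y Z) X W U + ψ (M.bracket Y W) X Z U - ψ (M.bracket Y U) X Z W
    - ψ (M.bracket Z W) X Y U + ψ (M.bracket Z U) X Y W
    - ψ (M.bracket W U) X Y Z

/-- the Nijenhuis tensor `N_A(X,Y)` -/
def nijV (A : V → V) : V → V → V := fun X Y =>
  M.bracket X Y + A (M.bracket (A X) Y) + A (M.bracket X (A Y)) - M.bracket (A X) (A Y)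

/-- the Nijenhuis `(0,3)`-tensor `N_A(X,Y,Z) = g(X, N_A(Y,Z))` -/
def nij3 (A : V → V) : V → V → V → C := fun X Y Z => M.g X (M.nijV A Y Z)

/-- the induced inner product of two 2-forms,
`⟨ψ,φ⟩ = (1/2!) ψ(e_i,e_j) φ(e_i,e_j)` -/
def inner2 (ψ φ : V → V → C) : C :=
  (1/2 : ℝ) • ∑ i, ∑ j, ψ (M.frame i) (M.frame j) * φ (M.frame i) (M.frame j)

/-- the contraction `(Λ_A β)(X) = ⟨X ⌟ β, ω_A⟩` of a three-form -/
def Lam (A : V → V) (β : V → V → V → C) : V → C :=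
  fun X => (1/2 : ℝ) •
    ∑ i, ∑ j, β X (M.frame i) (M.frame j) * M.omega A (M.frame i) (M.frame j)

/-- `λ_I(X) = (1/2n) ⟨∇_X ω_J, ω_K⟩` -/
def lambdaI : V → C := fun X =>
  (1/(2*(n:ℝ))) • M.inner2 (fun Y Z => M.nab2 (M.omega M.J) X Y Z) (M.omega M.K)

/-- `λ_J(X) = (1/2n) ⟨∇_X ω_K, ω_I⟩` -/
def lambdaJ : V → C := fun X =>
  (1/(2*(n:ℝ))) • M.inner2 (fun Y Z => M.nab2 (M.omega M.K) X Y Z) (M.omega M.I)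

/-- `λ_K(X) = (1/2n) ⟨∇_X ω_I, ω_J⟩` -/
def lambdaK : V → C := fun X =>
  (1/(2*(n:ℝ))) • M.inner2 (fun Y Z => M.nab2 (M.omega M.I) X Y Z) (M.omega M.J)

/-- codifferential of a two-form -/
def codiff2 (ψ : V → V → C) : V → C := fun Z => -∑ i, M.nab2 ψ (M.frame i) (M.frame i) Z

/-- codifferential of a four-form -/
def codiff4 (ψ : V → V → V → V → C) : V → V → V → C :=
  fun X Y Z => -∑ i, M.nab4 ψ (M.frame i) (M.frame i) X Y Z

/-- `β_I = J dω_J + K dω_K` -/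
def betaI : V → V → V → C := fun X Y Z =>
  act3 M.J (M.d2 (M.omega M.J)) X Y Z + act3 M.K (M.d2 (M.omega M.K)) X Y Z

/-- `β_J = K dω_K + I dω_I` -/
def betaJ : V → V → V → C := fun X Y Z =>
  act3 M.K (M.d2 (M.omega M.K)) X Y Z + act3 M.I (M.d2 (M.omega M.I)) X Y Z

/-- `β_K = I dω_I + J dω_J` -/
def betaK : V → V → V → C := fun X Y Z =>
  act3 M.I (M.d2 (M.omega M.I)) X Y Z + act3 M.J (M.d2 (M.omega M.J)) X Y Z

/-- the intrinsic torsion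
`ξ_X Y = -(1/4) Σ_A A (∇_X A) Y + (1/2) Σ_A λ_A(X) A Y` -/
def xi : V → V → V := fun X Y =>
  (-(1/4 : ℝ)) • (M.I (M.nabA M.I X Y) + M.J (M.nabA M.J X Y) + M.K (M.nabA M.K X Y))
    + (1/2 : ℝ) • (M.lambdaI X • M.I Y + M.lambdaJ X • M.J Y + M.lambdaK X • M.K Y)

/-- the one-form `ν^I_4 = I Λ_I β_I` -/
def nu4I : V → C := act1 M.I (M.Lam M.I M.betaI)

/-- the one-form `ν^J_4 = J Λ_J β_J` -/
def nu4J : V → C := act1 M.J (M.Lam M.J M.betaJ)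

/-- the one-form `ν^K_4 = K Λ_K β_K` -/
def nu4K : V → C := act1 M.K (M.Lam M.K M.betaK)

/-- `ν^I_3`, determined by `J Λ_J β_I = (1/(2n-1)) (ν^I_4 + (2n+1)(n-1) ν^I_3)` -/
def nu3I : V → C := fun X =>
  (1/((2*(n:ℝ)+1) * ((n:ℝ)-1))) •
    ((2*(n:ℝ)-1) • act1 M.J (M.Lam M.J M.betaI) X - M.nu4I X)

/-- `ν^J_3`, determined by `K Λ_K β_J = (1/(2n-1)) (ν^J_4 + (2n+1)(n-1) ν^J_3)` -/
def nu3J : V → C := fun X =>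
  (1/((2*(n:ℝ)+1) * ((n:ℝ)-1))) •
    ((2*(n:ℝ)-1) • act1 M.K (M.Lam M.K M.betaJ) X - M.nu4J X)

/-- `ν^K_3`, determined by `I Λ_I β_K = (1/(2n-1)) (ν^K_4 + (2n+1)(n-1) ν^K_3)` -/
def nu3K : V → C := fun X =>
  (1/((2*(n:ℝ)+1) * ((n:ℝ)-1))) •
    ((2*(n:ℝ)-1) • act1 M.I (M.Lam M.I M.betaK) X - M.nu4K X)

/-- `β^{(E)}_{3I} = -(1/2) Jν^I_3 ∧ ω_J - (1/2) Kν^I_3 ∧ ω_K + (1/(2n-1)) Iν^I_3 ∧ ω_I` -/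
def betaE3I : V → V → V → C := fun X Y Z =>
  (-(1/2:ℝ)) • wedge12 (act1 M.J M.nu3I) (M.omega M.J) X Y Z
    + (-(1/2:ℝ)) • wedge12 (act1 M.K M.nu3I) (M.omega M.K) X Y Z
    + (1/(2*(n:ℝ)-1)) • wedge12 (act1 M.I M.nu3I) (M.omega M.I) X Y Z

def betaE3J : V → V → V → C := fun X Y Z =>
  (-(1/2:ℝ)) • wedge12 (act1 M.K M.nu3J) (M.omega M.K) X Y Z
    + (-(1/2:ℝ)) • wedge12 (act1 M.I M.nu3J) (M.omega M.I) X Y Z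
    + (1/(2*(n:ℝ)-1)) • wedge12 (act1 M.J M.nu3J) (M.omega M.J) X Y Z

def betaE3K : V → V → V → C := fun X Y Z =>
  (-(1/2:ℝ)) • wedge12 (act1 M.I M.nu3K) (M.omega M.I) X Y Z
    + (-(1/2:ℝ)) • wedge12 (act1 M.J M.nu3K) (M.omega M.J) X Y Z
    + (1/(2*(n:ℝ)-1)) • wedge12 (act1 M.K M.nu3K) (M.omega M.K) X Y Z

/-- `β_{4I} = -(1/(2n-1)) Iν^I_4 ∧ ω_I` -/
def beta4I : V → V → V → C := fun X Y Z =>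
  (-(1/(2*(n:ℝ)-1))) • wedge12 (act1 M.I M.nu4I) (M.omega M.I) X Y Z

def beta4J : V → V → V → C := fun X Y Z =>
  (-(1/(2*(n:ℝ)-1))) • wedge12 (act1 M.J M.nu4J) (M.omega M.J) X Y Z

def beta4K : V → V → V → C := fun X Y Z =>
  (-(1/(2*(n:ℝ)-1))) • wedge12 (act1 M.K M.nu4K) (M.omega M.K) X Y Z

/-- `β_I^{(3+K)} = β_I - β^{(E)}_{3I} - β_{4I}` -/
def beta3KI : V → V → V → C := fun X Y Z => M.betaI X Y Z - M.betaE3I X Y Z - M.beta4I X Y Z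

def beta3KJ : V → V → V → C := fun X Y Z => M.betaJ X Y Z - M.betaE3J X Y Z - M.beta4J X Y Z

def beta3KK : V → V → V → C := fun X Y Z => M.betaK X Y Z - M.betaE3K X Y Z - M.beta4K X Y Z

/-- `β_I^{(3)} = (1/6) (2 - 𝓛_J - 𝓛_K) β_I^{(3+K)}` -/
def beta3I : V → V → V → C := fun X Y Z =>
  (1/6:ℝ) • ((2:ℝ) • M.beta3KI X Y Z - calL M.J M.beta3KI X Y Z - calL M.K M.beta3KI X Y Z)

def beta3J : V → V → V → C := fun X Y Z =>
  (1/6:ℝ) • ((2:ℝ) • M.beta3KJ X Y Z - calL M.K M.beta3KJ X Y Z - calL M.I M.beta3KJ X Y Z)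

def beta3K : V → V → V → C := fun X Y Z =>
  (1/6:ℝ) • ((2:ℝ) • M.beta3KK X Y Z - calL M.I M.beta3KK X Y Z - calL M.J M.beta3KK X Y Z)

/-- `β_I^{(K)} = (1/6) (4 + 𝓛_J + 𝓛_K) β_I^{(3+K)}` -/
def betaKI : V → V → V → C := fun X Y Z =>
  (1/6:ℝ) • ((4:ℝ) • M.beta3KI X Y Z + calL M.J M.beta3KI X Y Z + calL M.K M.beta3KI X Y Z)

def betaKJ : V → V → V → C := fun X Y Z =>
  (1/6:ℝ) • ((4:ℝ) • M.beta3KJ X Y Z + calL M.K M.beta3KJ X Y Z + calL M.I M.beta3KJ X Y Z)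

def betaKK : V → V → V → C := fun X Y Z =>
  (1/6:ℝ) • ((4:ℝ) • M.beta3KK X Y Z + calL M.I M.beta3KK X Y Z + calL M.J M.beta3KK X Y Z)

/-- the three-form `ψ^{(3)} = (1/12)(β_I^{(3)} + β_J^{(3)} + β_K^{(3)})` determining `ξ_{33}` -/
def psi3 : V → V → V → C := fun X Y Z =>
  (1/12:ℝ) • (M.beta3I X Y Z + M.beta3J X Y Z + M.beta3K X Y Z)

/-- the three-form `ψ^{(K)} = -(1/48)(β_I^{(K)} + β_J^{(K)} + β_K^{(K)})` determining `ξ_{KH}` -/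
def psiK : V → V → V → C := fun X Y Z =>
  (-(1/48:ℝ)) • (M.betaKI X Y Z + M.betaKJ X Y Z + M.betaKK X Y Z)

/-- the three-form `ψ^{(3)}_I` determining `ξ_{3H}` -/
def psi3I : V → V → V → C := fun X Y Z =>
  (-(1/8:ℝ)) • M.beta3I X Y Z
    + (1/48:ℝ) • ((3:ℝ) • (M.beta3I X Y Z + M.beta3J X Y Z + M.beta3K X Y Z)
        + calL M.I (fun a b c => M.beta3I a b c + M.beta3J a b c + M.beta3K a b c) X Y Z)

def psi3J : V → V → V → C := fun X Y Z =>
  (-(1/8:ℝ)) • M.beta3J X Y Z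
    + (1/48:ℝ) • ((3:ℝ) • (M.beta3I X Y Z + M.beta3J X Y Z + M.beta3K X Y Z)
        + calL M.J (fun a b c => M.beta3I a b c + M.beta3J a b c + M.beta3K a b c) X Y Z)

def psi3K : V → V → V → C := fun X Y Z =>
  (-(1/8:ℝ)) • M.beta3K X Y Z
    + (1/48:ℝ) • ((3:ℝ) • (M.beta3I X Y Z + M.beta3J X Y Z + M.beta3K X Y Z)
        + calL M.K (fun a b c => M.beta3I a b c + M.beta3J a b c + M.beta3K a b c) X Y Z)

/-- the three-form `ψ^{(K)}_I` determining `ξ_{K3}` -/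
def psiKI : V → V → V → C := fun X Y Z =>
  (-(1/2:ℝ)) • M.betaKI X Y Z
    + (1/6:ℝ) • (M.betaKI X Y Z + M.betaKJ X Y Z + M.betaKK X Y Z)

def psiKJ : V → V → V → C := fun X Y Z =>
  (-(1/2:ℝ)) • M.betaKJ X Y Z
    + (1/6:ℝ) • (M.betaKI X Y Z + M.betaKJ X Y Z + M.betaKK X Y Z)

def psiKK : V → V → V → C := fun X Y Z =>
  (-(1/2:ℝ)) • M.betaKK X Y Z
    + (1/6:ℝ) • (M.betaKI X Y Z + M.betaKJ X Y Z + M.betaKK X Y Z)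

/-- the one-form `θ^ξ` determining `ξ_{EH}`,
defined by `(6/n)(2n+1)(n-1) θ^ξ(X) = -⟨ξ_{e_i} e_i, X⟩` -/
def thetaXi : V → C := fun X =>
  (-((n:ℝ)/(6*(2*(n:ℝ)+1)*((n:ℝ)-1)))) • ∑ i, M.g (M.xi (M.frame i) (M.frame i)) X

/-- the local one-form `θ^ξ_I`, defined by `(2/n)(2n+1)(n-1) θ^ξ_I(X) = -⟨I ξ_{e_i} I e_i, X⟩` -/
def thetaXiI : V → C := fun X =>
  (-((n:ℝ)/(2*(2*(n:ℝ)+1)*((n:ℝ)-1)))) •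
    ∑ i, M.g (M.I (M.xi (M.frame i) (M.I (M.frame i)))) X

def thetaXiJ : V → C := fun X =>
  (-((n:ℝ)/(2*(2*(n:ℝ)+1)*((n:ℝ)-1)))) •
    ∑ i, M.g (M.J (M.xi (M.frame i) (M.J (M.frame i)))) X

def thetaXiK : V → C := fun X =>
  (-((n:ℝ)/(2*(2*(n:ℝ)+1)*((n:ℝ)-1)))) •
    ∑ i, M.g (M.K (M.xi (M.frame i) (M.K (M.frame i)))) X

/-- `α_I = -λ_I ⊗ g + (1/2)(J_(2) - J_(3)) ∇ω_K` -/
def alphaI : V → V → V → C := fun X Y Z =>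
  -(M.lambdaI X * M.g Y Z)
    + (1/2:ℝ) • (-(M.nab2 (M.omega M.K) X (M.J Y) Z) + M.nab2 (M.omega M.K) X Y (M.J Z))

def alphaJ : V → V → V → C := fun X Y Z =>
  -(M.lambdaJ X * M.g Y Z)
    + (1/2:ℝ) • (-(M.nab2 (M.omega M.I) X (M.K Y) Z) + M.nab2 (M.omega M.I) X Y (M.K Z))

def alphaK : V → V → V → C := fun X Y Z =>
  -(M.lambdaK X * M.g Y Z)
    + (1/2:ℝ) • (-(M.nab2 (M.omega M.J) X (M.I Y) Z) + M.nab2 (M.omega M.J) X Y (M.I Z))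

/-- the one-form `η_I(X) = α_I(e_i; e_i, X)` -/
def etaI : V → C := fun X => ∑ i, M.alphaI (M.frame i) (M.frame i) X

def etaJ : V → C := fun X => ∑ i, M.alphaJ (M.frame i) (M.frame i) X

def etaK : V → C := fun X => ∑ i, M.alphaK (M.frame i) (M.frame i) X

/-- the fundamental four-form `Ω = Σ_A ω_A ∧ ω_A` -/
def Omega4 : V → V → V → V → C := fun X Y Z W =>
  wedge22 (M.omega M.I) (M.omega M.I) X Y Z W
    + wedge22 (M.omega M.J) (M.omega M.J) X Y Z W
    + wedge22 (M.omega M.K) (M.omega M.K) X Y Z W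

/-- the one-form `θ^{d*Ω} = (1/3) Σ_A A Λ_A d*Ω` -/
def thetaDOmega : V → C := fun X =>
  (1/3:ℝ) • (act1 M.I (M.Lam M.I (M.codiff4 M.Omega4)) X
    + act1 M.J (M.Lam M.J (M.codiff4 M.Omega4)) X
    + act1 M.K (M.Lam M.K (M.codiff4 M.Omega4)) X)

/-- the vector-valued torsion: `g(W, T(X,Y)) = T(W,X,Y)` -/
def Tvec (T : V → V → V → C) : V → V → V := fun X Y => ∑ i, T (M.frame i) X Y • M.frame i

/-- the connection `∇ + (1/2) T` associated to a torsion (0,3)-tensor `T` -/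
def nabT (T : V → V → V → C) : V → V → V := fun X Y => M.nab X Y + (1/2:ℝ) • M.Tvec T X Y

/-- a connection is metric -/
def MetricConn (nab' : V → V → V) : Prop :=
  ∀ X Y Z, M.D X (M.g Y Z) = M.g (nab' X Y) Z + M.g Y (nab' X Z)

/-- a connection is quaternionic, with associated local one-forms `γ_I, γ_J, γ_K`:
`∇'_X I = γ_K(X) J - γ_J(X) K`, and cyclically -/
def QuatConn (nab' : V → V → V) (γI γJ γK : V → C) : Prop :=
  (∀ X Y, nab' X (M.I Y) - M.I (nab' X Y) = γK X • M.J Y - γJ X • M.K Y) ∧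
  (∀ X Y, nab' X (M.J Y) - M.J (nab' X Y) = γI X • M.K Y - γK X • M.I Y) ∧
  (∀ X Y, nab' X (M.K Y) - M.K (nab' X Y) = γJ X • M.I Y - γI X • M.J Y)

/-- the HKT condition: `I, J, K` integrable and there is a metric connection
`∇ + (1/2)T` with totally skew torsion making `I, J, K` parallel -/
def IsHKT : Prop :=
  (∀ X Y, M.nijV M.I X Y = 0) ∧ (∀ X Y, M.nijV M.J X Y = 0) ∧
  (∀ X Y, M.nijV M.K X Y = 0) ∧
  ∃ T : V → V → V → C, IsAlt3 T ∧ Lin3 T ∧ M.MetricConn (M.nabT T) ∧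
    (∀ X Y, M.nabT T X (M.I Y) = M.I (M.nabT T X Y)) ∧
    (∀ X Y, M.nabT T X (M.J Y) = M.J (M.nabT T X Y)) ∧
    (∀ X Y, M.nabT T X (M.K Y) = M.K (M.nabT T X Y))

/-- membership of a three-form in `KH`: type `{2,1}` for each `A` and `Λ_A ψ = 0` -/
def InKH3 (ψ : V → V → V → C) : Prop :=
  IsAlt3 ψ ∧ Lin3 ψ ∧
  calL M.I ψ = ψ ∧ calL M.J ψ = ψ ∧ calL M.K ψ = ψ ∧
  M.Lam M.I ψ = 0 ∧ M.Lam M.J ψ = 0 ∧ M.Lam M.K ψ = 0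

/-- the `(0,3)`-tensor of the `KH`-component of the torsion determined by `ψ^{(K)}`:
`3ψ - Σ_A A_(23) ψ` -/
def xiKH3 (ψ : V → V → V → C) : V → V → V → C := fun X Y Z =>
  (3:ℝ) • ψ X Y Z - (op23 M.I ψ X Y Z + op23 M.J ψ X Y Z + op23 M.K ψ X Y Z)

/-- the `(0,3)`-tensor of the `EH`-component of the torsion determined by the
one-form `θ`: `3 e_i ⊗ e_i ∧ θ - Σ_A (e_i ⊗ A e_i ∧ A θ + (2/n) A θ ⊗ ω_A)` -/
def xiEH3 (θ : V → C) : V → V → V → C := fun X Y Z =>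
  (3:ℝ) • ∑ i, M.g (M.frame i) X *
      (M.g (M.frame i) Y * θ Z - M.g (M.frame i) Z * θ Y)
  - ((∑ i, M.g (M.frame i) X *
        (M.g (M.I (M.frame i)) Y * act1 M.I θ Z - M.g (M.I (M.frame i)) Z * act1 M.I θ Y))
    + (∑ i, M.g (M.frame i) X *
        (M.g (M.J (M.frame i)) Y * act1 M.J θ Z - M.g (M.J (M.frame i)) Z * act1 M.J θ Y))
    + (∑ i, M.g (M.frame i) X *
        (M.g (M.K (M.frame i)) Y * act1 M.K θ Z - M.g (M.K (M.frame i)) Z * act1 M.K θ Y)))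
  - (2/(n:ℝ)) • (act1 M.I θ X * M.omega M.I Y Z + act1 M.J θ X * M.omega M.J Y Z
      + act1 M.K θ X * M.omega M.K Y Z)

/-- the intrinsic torsion lies in `(K+E)H`: it is the sum of a `KH`-tensor and an
`EH`-tensor as described in §3 of the paper -/
def inKEH : Prop :=
  ∃ (ψ : V → V → V → C) (θ : V → C), M.InKH3 ψ ∧ Lin1 θ ∧
    ∀ X Y Z, M.g Y (M.xi X Z) = M.xiKH3 ψ X Y Z + M.xiEH3 θ X Y Z

end derived

end AQH

namespace AQH

set_option linter.unusedSectionVars false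

section basics

variable {n : ℕ} {C V : Type*} [CommRing C] [Algebra ℝ C] [AddCommGroup V] [Module C V]
  [Module ℝ V] [IsScalarTower ℝ C V]

/-- cancellation of a nonzero real factor -/
theorem rcancel (r : ℝ) (hr : r ≠ 0) {a b : C}
    (h : algebraMap ℝ C r * a = algebraMap ℝ C r * b) : a = b := by
  have h2 : algebraMap ℝ C r⁻¹ * algebraMap ℝ C r = 1 := by
    rw [← map_mul, inv_mul_cancel₀ hr, map_one]
  calc a = algebraMap ℝ C r⁻¹ * (algebraMap ℝ C r * a) := by rw [← mul_assoc, h2, one_mul]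
    _ = algebraMap ℝ C r⁻¹ * (algebraMap ℝ C r * b) := by rw [h]
    _ = b := by rw [← mul_assoc, h2, one_mul]

theorem cancel2 {a b : C} (h : 2 * a = 2 * b) : a = b :=
  rcancel (C := C) 2 (by norm_num) (by rwa [map_ofNat])

theorem cancel4 {a b : C} (h : 4 * a = 4 * b) : a = b :=
  rcancel (C := C) 4 (by norm_num) (by rwa [map_ofNat])

theorem cancel8 {a b : C} (h : 8 * a = 8 * b) : a = b :=
  rcancel (C := C) 8 (by norm_num) (by rwa [map_ofNat])

/-- the cyclically permuted adapted basis -/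
def cyc (M : AQH n C V) : AQH n C V :=
  { M with
    I := M.J
    J := M.K
    K := M.I
    I_lin := M.J_lin
    J_lin := M.K_lin
    K_lin := M.I_lin
    I_sq := M.J_sq
    J_sq := by
      intro X
      have hn : ∀ Y, M.J (-Y) = -M.J Y := by
        intro Y
        have h0 := M.J_lin 1 0 0
        have h1 := M.J_lin (-1) Y 0
        simp at h0 h1
        rw [h1, h0]; simp
      rw [M.K_def (M.K X), M.K_def X, M.anticomm (M.I (M.J X)), M.I_sq, hn, M.J_sq]
      simp
    K_def := by
      intro X
      have hI0 := M.I_lin 1 0 0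
      have h1 := M.I_lin (-1) X 0
      simp at hI0 h1
      have h2 := M.anticomm (M.J X)
      rw [M.J_sq, h1, hI0] at h2
      rw [M.K_def]
      simpa using h2
    anticomm := by
      intro X
      have hI0 := M.I_lin 1 0 0
      have h1 := M.I_lin (-1) X 0
      simp at hI0 h1
      have h2 := M.anticomm (M.J X)
      rw [M.J_sq, h1, hI0] at h2
      rw [M.K_def, M.K_def, M.J_sq, h1, hI0, h2]
      simp
    I_metric := M.J_metric
    J_metric := by
      intro X Y
      rw [M.K_def, M.K_def, M.I_metric, M.J_metric] }

variable (M : AQH n C V)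

theorem I_add (X Y : V) : M.I (X + Y) = M.I X + M.I Y := by
  simpa using M.I_lin 1 X Y

theorem I_zero : M.I 0 = 0 := by
  simpa using M.I_lin 1 0 0

theorem I_smul (f : C) (X : V) : M.I (f • X) = f • M.I X := by
  simpa [M.I_zero] using M.I_lin f X 0

theorem I_neg (X : V) : M.I (-X) = -M.I X := by
  simpa using M.I_smul (-1) X

theorem J_add (X Y : V) : M.J (X + Y) = M.J X + M.J Y := M.cyc.I_add X Y
theorem J_zero : M.J 0 = 0 := M.cyc.I_zero
theorem J_smul (f : C) (X : V) : M.J (f • X) = f • M.J X := M.cyc.I_smul f X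
theorem J_neg (X : V) : M.J (-X) = -M.J X := M.cyc.I_neg X
theorem K_add (X Y : V) : M.K (X + Y) = M.K X + M.K Y := M.cyc.cyc.I_add X Y
theorem K_zero : M.K 0 = 0 := M.cyc.cyc.I_zero
theorem K_smul (f : C) (X : V) : M.K (f • X) = f • M.K X := M.cyc.cyc.I_smul f X
theorem K_neg (X : V) : M.K (-X) = -M.K X := M.cyc.cyc.I_neg X

theorem KK (X : V) : M.K (M.K X) = -X := M.cyc.J_sq X
theorem IJ (X : V) : M.I (M.J X) = M.K X := (M.K_def X).symm
theorem JK (X : V) : M.J (M.K X) = M.I X := M.cyc.IJ X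
theorem KI (X : V) : M.K (M.I X) = M.J X := M.cyc.cyc.IJ X
theorem JI (X : V) : M.J (M.I X) = -M.K X := by
  rw [← M.IJ, M.anticomm, neg_neg]
theorem KJ (X : V) : M.K (M.J X) = -M.I X := M.cyc.JI X
theorem IK (X : V) : M.I (M.K X) = -M.J X := M.cyc.cyc.JI X

theorem g_zero (Y : V) : M.g 0 Y = 0 := by
  simpa using M.g_smul 0 0 Y
theorem g_neg (X Y : V) : M.g (-X) Y = -M.g X Y := by
  simpa using M.g_smul (-1) X Y
theorem g_sub (X X' Y : V) : M.g (X - X') Y = M.g X Y - M.g X' Y := by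
  rw [sub_eq_add_neg, M.g_add, M.g_neg, sub_eq_add_neg]
theorem g_add2 (X Y Z : V) : M.g X (Y + Z) = M.g X Y + M.g X Z := by
  rw [M.g_symm, M.g_add, M.g_symm Y, M.g_symm Z]
theorem g_smul2 (f : C) (X Y : V) : M.g X (f • Y) = f * M.g X Y := by
  rw [M.g_symm, M.g_smul, M.g_symm Y]
theorem g_zero2 (X : V) : M.g X 0 = 0 := by rw [M.g_symm, M.g_zero]
theorem g_neg2 (X Y : V) : M.g X (-Y) = -M.g X Y := by
  rw [M.g_symm, M.g_neg, M.g_symm Y]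
theorem g_sub2 (X Y Z : V) : M.g X (Y - Z) = M.g X Y - M.g X Z := by
  rw [M.g_symm, M.g_sub, M.g_symm Y, M.g_symm Z]
theorem rsmul_V (r : ℝ) (X : V) : r • X = (algebraMap ℝ C r) • X := by
  rw [algebraMap_smul]
theorem g_rsmul2 (r : ℝ) (X Y : V) : M.g X (r • Y) = algebraMap ℝ C r * M.g X Y := by
  rw [rsmul_V (C := C) r Y, M.g_smul2]

theorem gI (X Y : V) : M.g (M.I X) Y = -M.g X (M.I Y) := by
  have h := M.I_metric X (M.I Y)
  rw [M.I_sq, M.g_neg2] at h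
  rw [← h, neg_neg]
theorem gJ (X Y : V) : M.g (M.J X) Y = -M.g X (M.J Y) := M.cyc.gI X Y
theorem gK (X Y : V) : M.g (M.K X) Y = -M.g X (M.K Y) := M.cyc.cyc.gI X Y

theorem g_ext {X Y : V} (h : ∀ Z, M.g Z X = M.g Z Y) : X = Y := by
  rw [M.frame_span X, M.frame_span Y]
  refine Finset.sum_congr rfl fun i _ => ?_
  rw [M.g_symm, h, M.g_symm]

theorem nab_zero (X : V) : M.nab X 0 = 0 := by
  simpa using M.nab_add X 0 0
theorem nab_neg (X Y : V) : M.nab X (-Y) = -M.nab X Y := by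
  have h := M.nab_add X Y (-Y)
  rw [add_neg_cancel, M.nab_zero] at h
  exact (neg_eq_of_add_eq_zero_right h.symm).symm

/-- `(∇_X ω_A)(Y,Z)` -/
def t (A : V → V) (X Y Z : V) : C := M.g Y (M.nabA A X Z)

theorem nab2_eq (A : V → V) (X Y Z : V) : M.nab2 (M.omega A) X Y Z = M.t A X Y Z := by
  simp only [nab2, omega, t, nabA, M.nab_metric, M.g_sub2]
  ring

theorem tI_skew (X Y Z : V) : M.t M.I X Y Z = -M.t M.I X Z Y := by
  have h1 := M.nab_metric X (M.I Y) Z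
  have h2 := M.nab_metric X Y (M.I Z)
  have h3 : M.g (M.I Y) Z = -M.g Y (M.I Z) := M.gI Y Z
  have h4 : M.D X (M.g (M.I Y) Z) = - M.D X (M.g Y (M.I Z)) := by
    rw [h3]
    have := M.D_mul X (algebraMap ℝ C (-1)) (M.g Y (M.I Z))
    rw [M.D_const] at this
    simpa using this
  simp only [t, nabA, M.g_sub2]
  rw [h4] at h1
  have e1 := M.gI (M.nab X Y) Z
  have e2 := M.gI Y (M.nab X Z)
  rw [M.g_symm (M.nab X (M.I Y)) Z] at h1
  rw [M.g_symm (M.I (M.nab X Y)) Z] at e1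
  linear_combination -h1 - h2 - e1 - e2
theorem tJ_skew (X Y Z : V) : M.t M.J X Y Z = -M.t M.J X Z Y := M.cyc.tI_skew X Y Z
theorem tK_skew (X Y Z : V) : M.t M.K X Y Z = -M.t M.K X Z Y := M.cyc.cyc.tI_skew X Y Z

theorem d2_I (X Y Z : V) : M.d2 (M.omega M.I) X Y Z
    = M.t M.I X Y Z + M.t M.I Y Z X + M.t M.I Z X Y := by
  have h : ∀ X Y Z, M.D X (M.omega M.I Y Z)
      = M.t M.I X Y Z + M.omega M.I (M.nab X Y) Z + M.omega M.I Y (M.nab X Z) := by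
    intro X Y Z
    rw [← M.nab2_eq]; simp only [nab2]; ring
  have s : ∀ X Y, M.omega M.I X Y = -M.omega M.I Y X := by
    intro X Y
    simp only [omega]
    rw [M.g_symm, M.gI]
  have sb : ∀ X Y Z, M.omega M.I (X - Y) Z = M.omega M.I X Z - M.omega M.I Y Z := by
    intro X Y Z
    simp only [omega, M.g_sub]
  simp only [d2, h, ← M.torsion_free, sb]
  rw [M.tI_skew Y X Z, s X (M.nab Y Z), s X (M.nab Z Y), s Y (M.nab X Z)]
  ring
theorem d2_J (X Y Z : V) : M.d2 (M.omega M.J) X Y Z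
    = M.t M.J X Y Z + M.t M.J Y Z X + M.t M.J Z X Y := M.cyc.d2_I X Y Z
theorem d2_K (X Y Z : V) : M.d2 (M.omega M.K) X Y Z
    = M.t M.K X Y Z + M.t M.K Y Z X + M.t M.K Z X Y := M.cyc.cyc.d2_I X Y Z

theorem tI_add1 (X X' Y Z : V) : M.t M.I (X + X') Y Z = M.t M.I X Y Z + M.t M.I X' Y Z := by
  simp only [t, nabA, M.nab_addX, M.I_add, M.g_sub2, M.g_add2]; ring
theorem tI_smul1 (f : C) (X Y Z : V) : M.t M.I (f • X) Y Z = f * M.t M.I X Y Z := by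
  simp only [t, nabA, M.nab_smulX, M.I_smul, M.g_sub2, M.g_smul2]; ring
theorem tI_add2 (X Y Y' Z : V) : M.t M.I X (Y + Y') Z = M.t M.I X Y Z + M.t M.I X Y' Z := by
  simp only [t, M.g_add]
theorem tI_smul2 (f : C) (X Y Z : V) : M.t M.I X (f • Y) Z = f * M.t M.I X Y Z := by
  simp only [t, M.g_smul]
theorem tI_lin1 (f : C) (X X' Y Z : V) :
    M.t M.I (f • X + X') Y Z = f * M.t M.I X Y Z + M.t M.I X' Y Z := by
  rw [M.tI_add1, M.tI_smul1]
theorem tI_lin2 (f : C) (X Y Y' Z : V) :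
    M.t M.I X (f • Y + Y') Z = f * M.t M.I X Y Z + M.t M.I X Y' Z := by
  rw [M.tI_add2, M.tI_smul2]
theorem tI_lin3 (f : C) (X Y Z Z' : V) :
    M.t M.I X Y (f • Z + Z') = f * M.t M.I X Y Z + M.t M.I X Y Z' := by
  rw [M.tI_skew, M.tI_lin2, M.tI_skew X Z, M.tI_skew X Z']; ring

theorem tI_neg1 (X Y Z : V) : M.t M.I (-X) Y Z = -M.t M.I X Y Z := by
  simpa using M.tI_smul1 (-1) X Y Z
theorem tI_neg2 (X Y Z : V) : M.t M.I X (-Y) Z = -M.t M.I X Y Z := by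
  simpa using M.tI_smul2 (-1) X Y Z
theorem tI_neg3 (X Y Z : V) : M.t M.I X Y (-Z) = -M.t M.I X Y Z := by
  rw [M.tI_skew, M.tI_neg2, M.tI_skew X Y Z]
theorem tJ_neg1 (X Y Z : V) : M.t M.J (-X) Y Z = -M.t M.J X Y Z := M.cyc.tI_neg1 X Y Z
theorem tJ_neg2 (X Y Z : V) : M.t M.J X (-Y) Z = -M.t M.J X Y Z := M.cyc.tI_neg2 X Y Z
theorem tJ_neg3 (X Y Z : V) : M.t M.J X Y (-Z) = -M.t M.J X Y Z := M.cyc.tI_neg3 X Y Z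
theorem tK_neg1 (X Y Z : V) : M.t M.K (-X) Y Z = -M.t M.K X Y Z := M.cyc.cyc.tI_neg1 X Y Z
theorem tK_neg2 (X Y Z : V) : M.t M.K X (-Y) Z = -M.t M.K X Y Z := M.cyc.cyc.tI_neg2 X Y Z
theorem tK_neg3 (X Y Z : V) : M.t M.K X Y (-Z) = -M.t M.K X Y Z := M.cyc.cyc.tI_neg3 X Y Z

theorem tI_II (X Y Z : V) : M.t M.I X (M.I Y) (M.I Z) = -M.t M.I X Y Z := by
  simp only [t, nabA, M.I_sq, M.nab_neg, M.g_sub2, M.g_neg2, M.gI]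
  ring
theorem tJ_JJ (X Y Z : V) : M.t M.J X (M.J Y) (M.J Z) = -M.t M.J X Y Z := M.cyc.tI_II X Y Z
theorem tK_KK (X Y Z : V) : M.t M.K X (M.K Y) (M.K Z) = -M.t M.K X Y Z := M.cyc.cyc.tI_II X Y Z

theorem tK_eq (X Y Z : V) :
    M.t M.K X Y Z = M.t M.I X Y (M.J Z) - M.t M.J X (M.I Y) Z := by
  simp only [t, nabA, M.g_sub2, M.gI, M.IJ]
  ring
theorem tI_eq (X Y Z : V) :
    M.t M.I X Y Z = M.t M.J X Y (M.K Z) - M.t M.K X (M.J Y) Z := M.cyc.tK_eq X Y Z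
theorem tJ_eq (X Y Z : V) :
    M.t M.J X Y Z = M.t M.K X Y (M.I Z) - M.t M.I X (M.K Y) Z := M.cyc.cyc.tK_eq X Y Z

end basics
end AQH

namespace AQH

section core

variable {n : ℕ} {C V : Type*} [CommRing C] [Algebra ℝ C] [AddCommGroup V] [Module C V]
  [Module ℝ V] [IsScalarTower ℝ C V]
variable (M : AQH n C V)

set_option linter.unusedSectionVars false
set_option linter.unusedSimpArgs false

/-- an operator of eigenvalues `1`, `-3` has no eigenvalue `-1` -/
theorem no_eig (Q : V → V → V → C)
    (n1 : ∀ X Y Z, Q (-X) Y Z = -Q X Y Z) (n2 : ∀ X Y Z, Q X (-Y) Z = -Q X Y Z)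
    (n3 : ∀ X Y Z, Q X Y (-Z) = -Q X Y Z)
    (h : ∀ X Y Z, Q (M.J X) (M.J Y) Z + Q (M.J X) Y (M.J Z) + Q X (M.J Y) (M.J Z)
      = -Q X Y Z) (X Y Z : V) : Q X Y Z = 0 := by
  have h0 := h X Y Z
  have h1 := h (M.J X) (M.J Y) Z
  have h2 := h (M.J X) Y (M.J Z)
  have h3 := h X (M.J Y) (M.J Z)
  simp only [M.J_sq, n1, n2, n3, neg_neg] at h1 h2 h3
  apply cancel4
  linear_combination h0 + h1 + h2 + h3

theorem core (T tI tJ tK : V → V → V → C) (alt : IsAlt3 T)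
    (Tn : ∀ X Y Z, T (-X) Y Z = -T X Y Z)
    (sI : ∀ X Y Z, tI X Y Z = -tI X Z Y)
    (sJ : ∀ X Y Z, tJ X Y Z = -tJ X Z Y)
    (sK : ∀ X Y Z, tK X Y Z = -tK X Z Y)
    (nI1 : ∀ X Y Z, tI (-X) Y Z = -tI X Y Z)
    (nI2 : ∀ X Y Z, tI X (-Y) Z = -tI X Y Z)
    (nJ2 : ∀ X Y Z, tJ X (-Y) Z = -tJ X Y Z)
    (nK2 : ∀ X Y Z, tK X (-Y) Z = -tK X Y Z)
    (II : ∀ X Y Z, tI X (M.I Y) (M.I Z) = -tI X Y Z)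
    (eJ : ∀ X Y Z, tJ X Y Z = tK X Y (M.I Z) - tI X (M.K Y) Z)
    (SI : ∀ X Y Z, tI X Y Z + tI Y Z X + tI Z X Y = T (M.I X) (M.I Y) (M.I Z))
    (SJ : ∀ X Y Z, tJ X Y Z + tJ Y Z X + tJ Z X Y = T (M.J X) (M.J Y) (M.J Z))
    (SK : ∀ X Y Z, tK X Y Z + tK Y Z X + tK Z X Y = T (M.K X) (M.K Y) (M.K Z)) :
    (∀ X Y Z, T (M.I X) (M.I Y) Z + T (M.I X) Y (M.I Z) + T X (M.I Y) (M.I Z) = T X Y Z) ∧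
    (∀ X Y Z, 2 * tI X Y Z = T X Y (M.I Z) + T X (M.I Y) Z) := by
  obtain ⟨a1, a2⟩ := alt
  have Tn2 : ∀ X Y Z, T X (-Y) Z = -T X Y Z := by
    intro X Y Z; rw [a1 (-Y) X Z, Tn, a1 X Y Z]; ring
  have Tn3 : ∀ X Y Z, T X Y (-Z) = -T X Y Z := by
    intro X Y Z; rw [a2 X (-Z) Y, Tn2, a2 X Y Z]; ring
  have nI3 : ∀ X Y Z, tI X Y (-Z) = -tI X Y Z := by
    intro X Y Z; rw [sI, nI2, sI X Y Z]
  have nK3 : ∀ X Y Z, tK X Y (-Z) = -tK X Y Z := by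
    intro X Y Z; rw [sK, nK2, sK X Y Z]
  have fa : ∀ W X Y, tK W X (M.I Y) = tJ W X Y + tI W (M.K X) Y := by
    intro W X Y; rw [eJ]; ring
  have fb : ∀ W X Y, tK W (M.I X) Y = tJ W X Y + tI W X (M.K Y) := by
    intro W X Y; rw [sK, fa, sJ, sI W X]; ring
  have Heq : ∀ X Y Z, -tI X Y (M.K Z) + tI (M.I X) (M.I Y) (M.K Z) + tI Y X (M.K Z)
      - tI (M.I Y) (M.I X) (M.K Z)
      = T (M.J X) (M.J Y) (M.J Z) - T (M.K X) (M.K Y) (M.J Z) - T (M.J X) (M.K Y) (M.K Z)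
        - T (M.K X) (M.J Y) (M.K Z) := by
    intro X Y Z
    have s1 := SJ X Y Z
    have s2 := SJ (M.I X) (M.I Y) Z
    have s3 := SK (M.I X) Y Z
    have s4 := SK X (M.I Y) Z
    have r1 := fb X Y Z
    have r2 := fa Y Z X
    have r3 := fb (M.I X) (M.I Y) Z
    have r4 := fa (M.I Y) Z (M.I X)
    have r5 := fa Z X Y
    have r6 := fa Z (M.I X) (M.I Y)
    have r7 := II Z (M.J X) (M.I Y)
    have r8 := sI Y X (M.K Z)
    have r9 := sI (M.I Y) (M.I X) (M.K Z)
    simp only [M.I_sq, M.KI, M.JI, M.IJ, nI1, nI2, nI3, nJ2, nK2, nK3, Tn, Tn2, Tn3, neg_neg]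
      at s1 s2 s3 s4 r1 r2 r3 r4 r5 r6 r7 r8 r9
    linear_combination s1 - s2 - s3 - s4 + r1 + r2 - r3 - r4 + r5 - r6 - r7 + r8 - r9
  let P : V → V → V → C := fun X Y Z =>
    T X Y Z - T (M.I X) (M.I Y) Z - T (M.I X) Y (M.I Z) - T X (M.I Y) (M.I Z)
  have Neq : ∀ X Y Z, -tI X Y Z + tI (M.I X) (M.I Y) Z + tI Y X Z - tI (M.I Y) (M.I X) Z
      = -P (M.J X) (M.J Y) (M.I Z) := by
    intro X Y Z
    have h := Heq X Y (M.K Z)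
    simp only [M.I_sq, M.KK, M.JK, M.IJ, nI3, Tn2, Tn3, Tn] at h
    simp only [P, M.I_sq, M.IJ, Tn3]
    linear_combination -h
  let Q : V → V → V → C := fun X Y Z => P (M.I X) Y Z
  have hQ : ∀ X Y Z, Q X Y Z = 0 := by
    apply M.no_eig Q
    · intro X Y Z; simp only [Q, P, M.I_neg, Tn]; ring
    · intro X Y Z; simp only [Q, P, M.I_neg, Tn2]; ring
    · intro X Y Z; simp only [Q, P, M.I_neg, Tn3]; ring
    · intro X Y Z
      have c1 := Neq X Y Z
      have c2 := Neq Y Z X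
      have c3 := Neq Z X Y
      have s0 := SI X Y Z
      have s1 := SI (M.I X) (M.I Y) Z
      have s2 := SI (M.I X) Y (M.I Z)
      have s3 := SI X (M.I Y) (M.I Z)
      have i1 := II X Y Z
      have i2 := II Y Z X
      have i3 := II Z X Y
      have k1 := sI X Y Z
      have k2 := sI Y Z X
      have k3 := sI Z X Y
      have k4 := sI (M.I Y) (M.I X) Z
      have k5 := sI (M.I Z) (M.I Y) X
      have k6 := sI (M.I X) (M.I Z) Y
      have p1 : ∀ X Y Z, P Y Z X = P X Y Z := by
        intro X Y Z
        have q : ∀ A B C, T B C A = T A B C := by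
          intro A B C; rw [a2, a1, neg_neg]
        simp only [P]
        rw [q X Y Z, q X (M.I Y) (M.I Z), q (M.I X) Y (M.I Z), q (M.I X) (M.I Y) Z]
        ring
      have p2 : ∀ X Y Z, P X (M.I Y) Z = P (M.I X) Y Z := by
        intro X Y Z
        simp only [P, M.I_sq, Tn, Tn2]; ring
      have p3 : ∀ X Y Z, P X Y (M.I Z) = P (M.I X) Y Z := by
        intro X Y Z
        simp only [P, M.I_sq, Tn, Tn3]; ring
      have p4 : T (M.I X) (M.I Y) (M.I Z) - T X Y (M.I Z) - T X (M.I Y) Z - T (M.I X) Y Z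
          = -P (M.I X) Y Z := by
        simp only [P, M.I_sq, Tn]; ring
      rw [p3] at c1 c2 c3
      simp only [M.I_sq, Tn, Tn2, Tn3, nI1, nI2, nI3] at s1 s2 s3 p4
      have e2 : P (M.I (M.J Y)) (M.J Z) X = P (M.I X) (M.J Y) (M.J Z) := by
        rw [p1, p2]
      have e3 : P (M.I (M.J Z)) (M.J X) Y = P (M.I (M.J X)) Y (M.J Z) := by
        rw [← p1, ← p3]
      rw [e2] at c2
      rw [e3] at c3
      simp only [Q]
      linear_combination c1 + c2 + c3 + p4 + s0 - s1 - s2 - s3 - k1 - k2 - k3 + k4 + k5 + k6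
        + i1 + i2 + i3
  have hP : ∀ X Y Z, P X Y Z = 0 := by
    intro X Y Z
    have h := hQ (M.I X) Y Z
    simp only [Q, M.I_sq] at h
    have : P (-X) Y Z = -P X Y Z := by
      simp only [P, M.I_neg, Tn]; ring
    rw [this] at h
    exact neg_eq_zero.mp h
  have hL : ∀ X Y Z, T (M.I X) (M.I Y) Z + T (M.I X) Y (M.I Z) + T X (M.I Y) (M.I Z)
      = T X Y Z := by
    intro X Y Z
    have h := hP X Y Z
    simp only [P] at h
    linear_combination -h
  refine ⟨hL, ?_⟩
  intro X Y Z
  have c := Neq Y Z X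
  rw [hP] at c
  have s0 := SI X Y Z
  have s1 := SI X (M.I Y) (M.I Z)
  have i1 := II X Y Z
  have l := hL (M.I X) Y Z
  have k1 := sI Z X Y
  have k2 := sI (M.I Z) X (M.I Y)
  simp only [M.I_sq, Tn, Tn2, Tn3] at s1 l
  linear_combination s0 - s1 + c + l + i1 - k1 + k2

end core
end AQH

namespace AQH

section torsion

variable {n : ℕ} {C V : Type*} [CommRing C] [Algebra ℝ C] [AddCommGroup V] [Module C V]
  [Module ℝ V] [IsScalarTower ℝ C V]
variable (M : AQH n C V)

set_option linter.unusedSectionVars false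
set_option linter.unusedSimpArgs false
set_option linter.unusedVariables false

/-- the formula for `∇ω_I` in terms of the torsion and the one-forms -/
def TFI (T : V → V → V → C) (γJ γK : V → C) : Prop := ∀ X Y Z,
  2 * M.t M.I X Y Z = 2 * (γK X * M.g Y (M.J Z) - γJ X * M.g Y (M.K Z))
    + T X Y (M.I Z) + T X (M.I Y) Z

/-- type condition on the torsion, pointwise -/
def LI (T : V → V → V → C) : Prop := ∀ X Y Z,
  T (M.I X) (M.I Y) Z + T (M.I X) Y (M.I Z) + T X (M.I Y) (M.I Z) = T X Y Z

/-- torsion data of a QKT connection -/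
structure QT (T : V → V → V → C) (γI γJ γK : V → C) : Prop where
  alt : IsAlt3 T
  lin : Lin3 T
  lI : M.LI T
  lJ : M.cyc.LI T
  lK : M.cyc.cyc.LI T
  fI : M.TFI T γJ γK
  fJ : M.cyc.TFI T γK γI
  fK : M.cyc.cyc.TFI T γI γJ

theorem QT.rot {M : AQH n C V} {T : V → V → V → C} {γI γJ γK : V → C}
    (h : M.QT T γI γJ γK) : M.cyc.QT T γJ γK γI :=
  ⟨h.alt, h.lin, h.lJ, h.lK, h.lI, h.fJ, h.fK, h.fI⟩

theorem Lin1.zero {ν : V → C} (h : Lin1 ν) : ν 0 = 0 := by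
  simpa using h 1 0 0
theorem Lin1.add {ν : V → C} (h : Lin1 ν) (X Y : V) : ν (X + Y) = ν X + ν Y := by
  simpa using h 1 X Y
theorem Lin1.smul {ν : V → C} (h : Lin1 ν) (f : C) (X : V) : ν (f • X) = f * ν X := by
  simpa [h.zero] using h f X 0
theorem Lin1.neg {ν : V → C} (h : Lin1 ν) (X : V) : ν (-X) = -ν X := by
  simpa using h.smul (-1) X
theorem Lin1.sum {ν : V → C} (h : Lin1 ν) {ι : Type*} (s : Finset ι) (f : ι → V) :
    ν (∑ i ∈ s, f i) = ∑ i ∈ s, ν (f i) := by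
  classical
  induction s using Finset.induction_on with
  | empty => simp [h.zero]
  | insert a s ha ih => rw [Finset.sum_insert ha, Finset.sum_insert ha, h.add, ih]

/-- contraction with the frame -/
theorem sum_lin {ν : V → C} (h : Lin1 ν) (X : V) :
    ∑ i, M.g X (M.frame i) * ν (M.frame i) = ν X := by
  conv_rhs => rw [M.frame_span X]
  rw [h.sum]
  exact Finset.sum_congr rfl fun i _ => (h.smul _ _).symm
theorem sum_lin2 {ν : V → C} (h : Lin1 ν) (X : V) :
    ∑ i, M.g (M.frame i) X * ν (M.frame i) = ν X := by
  rw [← M.sum_lin h X]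
  exact Finset.sum_congr rfl fun i _ => by rw [M.g_symm]


theorem lin_1 {T : V → V → V → C} (lin : Lin3 T) (Y Z : V) : Lin1 (fun X => T X Y Z) :=
  fun f X X' => lin f X X' Y Z
theorem lin_2 {T : V → V → V → C} (alt : IsAlt3 T) (lin : Lin3 T) (X Z : V) :
    Lin1 (fun Y => T X Y Z) := by
  intro f Y Y'
  simp only
  rw [alt.1 (f • Y + Y') X Z, lin, alt.1 X Y Z, alt.1 X Y' Z]; ring
theorem lin_3 {T : V → V → V → C} (alt : IsAlt3 T) (lin : Lin3 T) (X Y : V) :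
    Lin1 (fun Z => T X Y Z) := by
  intro f Z Z'
  have h := lin_2 alt lin X Y f Z Z'
  simp only at h ⊢
  rw [alt.2 X (f • Z + Z') Y, h, alt.2 X Y Z, alt.2 X Y Z']; ring

theorem T_neg1 {T : V → V → V → C} (lin : Lin3 T) (X Y Z : V) : T (-X) Y Z = -T X Y Z :=
  (lin_1 lin Y Z).neg X
theorem T_neg2 {T : V → V → V → C} (alt : IsAlt3 T) (lin : Lin3 T) (X Y Z : V) :
    T X (-Y) Z = -T X Y Z := (lin_2 alt lin X Z).neg Y
theorem T_neg3 {T : V → V → V → C} (alt : IsAlt3 T) (lin : Lin3 T) (X Y Z : V) :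
    T X Y (-Z) = -T X Y Z := (lin_3 alt lin X Y).neg Z

theorem g_Tvec {T : V → V → V → C} (lin : Lin3 T) (Y X Z : V) :
    M.g Y (M.Tvec T X Z) = T Y X Z := by
  have hg : Lin1 (fun W => M.g Y W) := by
    intro f W W'; simp only [M.g_add2, M.g_smul2]
  have h := hg.sum Finset.univ (fun i => T (M.frame i) X Z • M.frame i)
  simp only [Tvec] at h ⊢
  rw [h, ← M.sum_lin (lin_1 lin X Z) Y]
  exact Finset.sum_congr rfl fun i _ => by rw [M.g_smul2, mul_comm]

theorem two_half (r : C) : 2 * ((algebraMap ℝ C (1/2)) * r) = r := by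
  have h : (2 : C) = algebraMap ℝ C 2 := by rw [map_ofNat]
  rw [h, ← mul_assoc, ← map_mul]; norm_num

theorem TFI_of_conn {T : V → V → V → C} (alt : IsAlt3 T) (lin : Lin3 T) {γJ γK : V → C}
    (h : ∀ X Y, M.nabT T X (M.I Y) - M.I (M.nabT T X Y) = γK X • M.J Y - γJ X • M.K Y) :
    M.TFI T γJ γK := by
  intro X Y Z
  have h1 := congrArg (M.g Y) (h X Z)
  have e : ∀ W W' : V, M.g W (M.I W') = -M.g (M.I W) W' := by
    intro W W'; rw [M.gI, neg_neg]
  rw [M.g_sub2, e Y (M.nabT T X Z)] at h1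
  simp only [nabT, M.g_add2, M.g_rsmul2, M.g_Tvec lin, M.g_sub2, M.g_smul2] at h1
  have h2 := two_half (T Y X (M.I Z))
  have h3 := two_half (T (M.I Y) X Z)
  have h4 := alt.1 X Y (M.I Z)
  have h5 := alt.1 X (M.I Y) Z
  have e2 := M.gI Y (M.nab X Z)
  simp only [t, nabA, M.g_sub2]
  linear_combination 2 * h1 - h2 - h3 - h4 - h5 - 2 * e2

theorem QT_of_conn {T : V → V → V → C} {γI γJ γK : V → C}
    (h : IsAlt3 T ∧ Lin3 T ∧ calL M.I T = T ∧ calL M.J T = T ∧ calL M.K T = T ∧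
        M.MetricConn (M.nabT T) ∧ M.QuatConn (M.nabT T) γI γJ γK) :
    M.QT T γI γJ γK := by
  obtain ⟨alt, lin, lI, lJ, lK, _, q1, q2, q3⟩ := h
  refine ⟨alt, lin, ?_, ?_, ?_, M.TFI_of_conn alt lin q1, M.cyc.TFI_of_conn alt lin q2,
    M.cyc.cyc.TFI_of_conn alt lin q3⟩
  · intro X Y Z; exact congrFun (congrFun (congrFun lI X) Y) Z
  · intro X Y Z; exact congrFun (congrFun (congrFun lJ X) Y) Z
  · intro X Y Z; exact congrFun (congrFun (congrFun lK X) Y) Z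

theorem g_I_self (X : V) : M.g X (M.I X) = 0 := by
  apply cancel2
  have h := M.gI X X
  rw [M.g_symm] at h
  linear_combination h
theorem g_J_self (X : V) : M.g X (M.J X) = 0 := M.cyc.g_I_self X
theorem g_K_self (X : V) : M.g X (M.K X) = 0 := M.cyc.cyc.g_I_self X

theorem lin_of_TFI (hn : 2 ≤ n) {T : V → V → V → C} (lin : Lin3 T) {γJ γK : V → C}
    (h : M.TFI T γJ γK) : Lin1 γJ ∧ Lin1 γK := by
  let e := M.frame ⟨0, by omega⟩
  have he : M.g e e = 1 := by simp [e, M.frame_orthonormal]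
  have hI : M.g e (M.I e) = 0 := M.g_I_self e
  constructor
  · intro f X X'
    have k := h (f • X + X') (M.K e) e
    have k1 := h X (M.K e) e
    have k2 := h X' (M.K e) e
    have s := M.tI_lin1 f X X' (M.K e) e
    simp only [M.gK, M.KK, M.KJ, M.g_neg2, hI, he, lin f X X'] at k k1 k2
    apply cancel2
    linear_combination k - f * k1 - k2 - 2 * s
  · intro f X X'
    have k := h (f • X + X') (M.J e) e
    have k1 := h X (M.J e) e
    have k2 := h X' (M.J e) e
    have s := M.tI_lin1 f X X' (M.J e) e
    simp only [M.gJ, M.J_sq, M.JK, M.g_neg2, hI, he, lin f X X'] at k k1 k2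
    apply cancel2
    linear_combination -k + f * k1 + k2 + 2 * s

theorem QT.lins (hn : 2 ≤ n) {M : AQH n C V} {T : V → V → V → C} {γI γJ γK : V → C}
    (h : M.QT T γI γJ γK) : Lin1 γI ∧ Lin1 γJ ∧ Lin1 γK :=
  ⟨(M.cyc.lin_of_TFI hn h.lin h.fJ).2, M.lin_of_TFI hn h.lin h.fI⟩

/-- `dω_I` in terms of the torsion -/
theorem QT.dI {M : AQH n C V} {T : V → V → V → C} {γI γJ γK : V → C}
    (h : M.QT T γI γJ γK) (X Y Z : V) : M.d2 (M.omega M.I) X Y Z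
      = wedge12 γK (M.omega M.J) X Y Z - wedge12 γJ (M.omega M.K) X Y Z
        + T (M.I X) Y Z + T X (M.I Y) Z + T X Y (M.I Z) := by
  rw [M.d2_I]
  have f1 := h.fI X Y Z
  have f2 := h.fI Y Z X
  have f3 := h.fI Z X Y
  have q : ∀ A B C, T B C A = T A B C := by
    intro A B C; rw [h.alt.2, h.alt.1, neg_neg]
  rw [q (M.I X) Y Z, q X Y (M.I Z)] at f2
  rw [← q Z X (M.I Y), ← q Z (M.I X) Y] at f3
  have s1 : M.g X (M.J Z) = -M.g Z (M.J X) := by rw [M.g_symm, M.gJ]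
  have s2 : M.g X (M.K Z) = -M.g Z (M.K X) := by rw [M.g_symm, M.gK]
  simp only [wedge12, omega, s1, s2]
  apply cancel2
  linear_combination f1 + f2 + f3

theorem QT.eqT (hn : 2 ≤ n) {M : AQH n C V} {T : V → V → V → C} {γI γJ γK : V → C}
    (h : M.QT T γI γJ γK) (X Y Z : V) : T X Y Z = act3 M.I (M.d2 (M.omega M.I)) X Y Z
      + wedge12 (act1 M.J (act1 M.K γK)) (M.omega M.J) X Y Z
      + wedge12 (act1 M.K (act1 M.J γJ)) (M.omega M.K) X Y Z := by
  obtain ⟨_, lJ, lK⟩ := h.lins hn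
  have l := h.lI X Y Z
  simp only [act3, h.dI, wedge12, act1, omega, M.I_sq, M.KJ, M.JK, M.JI, M.KI, M.IK, M.IJ, M.gI,
    M.g_neg2, M.I_neg, M.J_neg, M.K_neg, lJ.neg, lK.neg, T_neg1 h.lin, T_neg2 h.alt h.lin, T_neg3 h.alt h.lin]
  linear_combination -l

end torsion
end AQH

namespace AQH

section traces

variable {n : ℕ} {C V : Type*} [CommRing C] [Algebra ℝ C] [AddCommGroup V] [Module C V]
  [Module ℝ V] [IsScalarTower ℝ C V]
variable (M : AQH n C V)

set_option linter.unusedSectionVars false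
set_option linter.unusedSimpArgs false
set_option linter.unusedVariables false

/-- the trace of a bilinear form is skew under moving `I` -/
theorem tr_I (F : V → V → C) (h1 : ∀ Y, Lin1 (fun X => F X Y)) (h2 : ∀ X, Lin1 (F X)) :
    ∑ i, F (M.frame i) (M.I (M.frame i)) = -∑ i, F (M.I (M.frame i)) (M.frame i) := by
  have a : ∀ i, F (M.frame i) (M.I (M.frame i))
      = ∑ j, M.g (M.I (M.frame i)) (M.frame j) * F (M.frame i) (M.frame j) := by
    intro i; exact (M.sum_lin (h2 (M.frame i)) _).symm
  have b : ∀ i, F (M.I (M.frame i)) (M.frame i)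
      = ∑ j, M.g (M.I (M.frame i)) (M.frame j) * F (M.frame j) (M.frame i) := by
    intro i; exact (M.sum_lin (h1 (M.frame i)) _).symm
  simp only [a, b]
  rw [Finset.sum_comm, ← Finset.sum_neg_distrib]
  refine Finset.sum_congr rfl fun i _ => ?_
  rw [← Finset.sum_neg_distrib]
  refine Finset.sum_congr rfl fun j _ => ?_
  rw [M.gI, M.g_symm]; ring

theorem tr_J (F : V → V → C) (h1 : ∀ Y, Lin1 (fun X => F X Y)) (h2 : ∀ X, Lin1 (F X)) :
    ∑ i, F (M.frame i) (M.J (M.frame i)) = -∑ i, F (M.J (M.frame i)) (M.frame i) :=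
  M.cyc.tr_I F h1 h2

/-- the contraction `Σ T(X, A e, e)` -/
def sig (A : V → V) (T : V → V → V → C) (X : V) : C := ∑ i, T X (A (M.frame i)) (M.frame i)

theorem two_Lam (A : V → V) (S : V → V → V → C) (X : V)
    (h : ∀ Z, Lin1 (fun Y => S X Y Z)) : 2 * M.Lam A S X = M.sig A S X := by
  simp only [Lam, omega, Algebra.smul_def]
  rw [two_half, Finset.sum_comm]
  refine Finset.sum_congr rfl fun j _ => ?_
  rw [← M.sum_lin2 (h (M.frame j)) (A (M.frame j))]
  exact Finset.sum_congr rfl fun i _ => mul_comm _ _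

theorem Lin1.compI {ν : V → C} (h : Lin1 ν) : Lin1 (fun X => ν (M.I X)) := by
  intro f X X'; simp only [M.I_lin]; exact h _ _ _
theorem Lin1.compJ {ν : V → C} (h : Lin1 ν) : Lin1 (fun X => ν (M.J X)) := h.compI M.cyc
theorem Lin1.compK {ν : V → C} (h : Lin1 ν) : Lin1 (fun X => ν (M.K X)) := h.compI M.cyc.cyc

/-- `Σ_i T X (J e_i) (I e_i) = σ_K(X)` -/
theorem sig_JI {T : V → V → V → C} (alt : IsAlt3 T) (lin : Lin3 T) (X : V) :
    ∑ i, T X (M.J (M.frame i)) (M.I (M.frame i)) = M.sig M.K T X := by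
  have h := M.tr_I (fun a b => T X (M.J a) b)
    (fun Y => (lin_2 alt lin X Y).compJ M) (fun a => lin_3 alt lin X (M.J a))
  simp only [M.JI, T_neg2 alt lin, Finset.sum_neg_distrib, neg_neg] at h
  exact h

theorem sig_IJ {T : V → V → V → C} (alt : IsAlt3 T) (lin : Lin3 T) (X : V) :
    ∑ i, T X (M.I (M.frame i)) (M.J (M.frame i)) = -M.sig M.K T X := by
  have h := M.tr_J (fun a b => T X (M.I a) b)
    (fun Y => (lin_2 alt lin X Y).compI M) (fun a => lin_3 alt lin X (M.I a))
  simp only [M.IJ] at h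
  exact h

theorem sig_KI {T : V → V → V → C} (alt : IsAlt3 T) (lin : Lin3 T) (X : V) :
    ∑ i, T X (M.K (M.frame i)) (M.I (M.frame i)) = -M.sig M.J T X :=
  M.cyc.cyc.sig_IJ alt lin X

theorem sig_KJ {T : V → V → V → C} (alt : IsAlt3 T) (lin : Lin3 T) (X : V) :
    ∑ i, T X (M.K (M.frame i)) (M.J (M.frame i)) = M.sig M.I T X :=
  M.cyc.sig_JI alt lin X

theorem sig_rel {T : V → V → V → C} (alt : IsAlt3 T) (lin : Lin3 T) (h : M.cyc.LI T) (X : V) :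
    M.sig M.I T X = -M.sig M.K T (M.J X) := by
  have h1 : ∀ i, T (M.J X) (M.J (M.I (M.frame i))) (M.frame i)
      + T (M.J X) (M.I (M.frame i)) (M.J (M.frame i))
      + T X (M.J (M.I (M.frame i))) (M.J (M.frame i)) = T X (M.I (M.frame i)) (M.frame i) :=
    fun i => h X (M.I (M.frame i)) (M.frame i)
  have h2 := Finset.sum_congr (rfl : (Finset.univ : Finset (Fin (4 * n))) = Finset.univ)
    (fun i _ => h1 i)
  simp only [M.JI, T_neg2 alt lin, Finset.sum_add_distrib, Finset.sum_neg_distrib,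
    M.sig_IJ alt lin, M.sig_KJ alt lin] at h2
  apply cancel2
  change -M.sig M.K T (M.J X) + _ + _ = M.sig M.I T X at h2
  linear_combination -h2

theorem sig_lin {T : V → V → V → C} (lin : Lin3 T) (A : V → V) : Lin1 (M.sig A T) := by
  intro f X X'
  simp only [sig, lin f X X', Finset.sum_add_distrib, Finset.mul_sum]

theorem QT.sigs {M : AQH n C V} {T : V → V → V → C} {γI γJ γK : V → C} (h : M.QT T γI γJ γK)
    (X : V) : M.sig M.J T X = -M.sig M.I T (M.K X) ∧ M.sig M.K T X = M.sig M.I T (M.J X) := by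
  refine ⟨M.cyc.sig_rel h.alt h.lin h.lK X, ?_⟩
  have := M.sig_rel h.alt h.lin h.lJ (M.J X)
  rw [M.J_sq, (M.sig_lin h.lin M.K).neg, neg_neg] at this
  exact this.symm

theorem sum_gg : ∑ i, M.g (M.frame i) (M.frame i) = (4 * n : C) := by
  simp [M.frame_orthonormal]

theorem wtr_I {ν : V → C} (h : Lin1 ν) (X : V) :
    M.sig M.I (wedge12 ν (M.omega M.I)) X = (4 * n - 2) * ν X := by
  have a : ∀ i, wedge12 ν (M.omega M.I) X (M.I (M.frame i)) (M.frame i)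
      = ν X * M.g (M.frame i) (M.frame i)
        + M.g (M.I X) (M.frame i) * ν (M.I (M.frame i)) - M.g X (M.frame i) * ν (M.frame i) := by
    intro i
    simp only [wedge12, omega, M.gI, M.I_sq, M.g_neg2]; ring
  simp only [sig, a, Finset.sum_add_distrib, Finset.sum_sub_distrib, ← Finset.mul_sum, M.sum_gg,
    M.sum_lin h, M.sum_lin (h.compI M), M.I_sq, h.neg]
  ring

theorem wtr_J {ν : V → C} (h : Lin1 ν) (X : V) :
    M.sig M.J (wedge12 ν (M.omega M.I)) X = -2 * ν (M.K X) := by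
  have a : ∀ i, wedge12 ν (M.omega M.I) X (M.J (M.frame i)) (M.frame i)
      = M.g (M.I X) (M.frame i) * ν (M.J (M.frame i))
        - M.g (M.K X) (M.frame i) * ν (M.frame i) := by
    intro i
    simp only [wedge12, omega, M.gI, M.gJ, M.gK, M.IJ, M.JI, M.g_neg2, M.g_K_self]; ring
  simp only [sig, a, Finset.sum_sub_distrib,
    M.sum_lin h, M.sum_lin (h.compJ M), M.JI, h.neg]
  ring

theorem wtr_K {ν : V → C} (h : Lin1 ν) (X : V) :
    M.sig M.K (wedge12 ν (M.omega M.I)) X = 2 * ν (M.J X) := by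
  have a : ∀ i, wedge12 ν (M.omega M.I) X (M.K (M.frame i)) (M.frame i)
      = M.g (M.I X) (M.frame i) * ν (M.K (M.frame i))
        + M.g (M.J X) (M.frame i) * ν (M.frame i) := by
    intro i
    simp only [wedge12, omega, M.gI, M.gJ, M.gK, M.IK, M.KI, M.g_neg2, M.g_J_self]; ring
  simp only [sig, a, Finset.sum_add_distrib,
    M.sum_lin h, M.sum_lin (h.compK M), M.KI, h.neg]
  ring

theorem g_lin2 (Y : V) : Lin1 (M.g Y) := by
  intro f W W'; simp only [M.g_add2, M.g_smul2]

/-- the contractions of `dω_I` -/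
theorem QT.LamI (hn : 2 ≤ n) {M : AQH n C V} {T : V → V → V → C} {γI γJ γK : V → C}
    (h : M.QT T γI γJ γK) (X : V) :
    2 * M.Lam M.I (M.d2 (M.omega M.I)) X
      = 2 * γK (M.K X) + 2 * γJ (M.J X) + M.sig M.I T (M.I X) ∧
    2 * M.Lam M.J (M.d2 (M.omega M.I)) X
      = (4 * n - 2) * γK X - 2 * γJ (M.I X) + M.sig M.I T (M.J X) ∧
    2 * M.Lam M.K (M.d2 (M.omega M.I)) X
      = -2 * γK (M.I X) - (4 * n - 2) * γJ X + M.sig M.I T (M.K X) := by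
  obtain ⟨lI, lJ, lK⟩ := h.lins hn
  have hd : ∀ Z, Lin1 (fun Y => M.d2 (M.omega M.I) X Y Z) := by
    intro Z f Y Y'
    simp only [M.d2_I]
    rw [M.tI_lin2, M.tI_lin1, M.tI_lin3]; ring
  rw [M.two_Lam _ _ _ hd, M.two_Lam _ _ _ hd, M.two_Lam _ _ _ hd]
  have hI : ∀ A, M.sig A (M.d2 (M.omega M.I)) X
      = M.sig A (wedge12 γK (M.omega M.J)) X - M.sig A (wedge12 γJ (M.omega M.K)) X
        + M.sig A T (M.I X) + ∑ i, T X (M.I (A (M.frame i))) (M.frame i)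
        + ∑ i, T X (A (M.frame i)) (M.I (M.frame i)) := by
    intro A
    simp only [sig, h.dI, Finset.sum_add_distrib, Finset.sum_sub_distrib]
  have z : ∀ Y, T X Y Y = 0 := by
    intro Y; apply cancel2
    linear_combination h.alt.2 X Y Y
  have s := h.sigs
  have w1 := M.cyc.wtr_I lK X
  have w2 := M.cyc.wtr_J lK X
  have w3 := M.cyc.wtr_K lK X
  have v1 := M.cyc.cyc.wtr_I lJ X
  have v2 := M.cyc.cyc.wtr_J lJ X
  have v3 := M.cyc.cyc.wtr_K lJ X
  change M.sig M.J (wedge12 γK (M.omega M.J)) X = (4 * n - 2) * γK X at w1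
  change M.sig M.K (wedge12 γK (M.omega M.J)) X = -2 * γK (M.I X) at w2
  change M.sig M.I (wedge12 γK (M.omega M.J)) X = 2 * γK (M.K X) at w3
  change M.sig M.K (wedge12 γJ (M.omega M.K)) X = (4 * n - 2) * γJ X at v1
  change M.sig M.I (wedge12 γJ (M.omega M.K)) X = -2 * γJ (M.J X) at v2
  change M.sig M.J (wedge12 γJ (M.omega M.K)) X = 2 * γJ (M.I X) at v3
  have n1 := fun Y => (M.sig_lin h.lin M.I).neg Y
  refine ⟨?_, ?_, ?_⟩
  · rw [hI, w3, v2]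
    simp only [M.I_sq, T_neg2 h.alt h.lin, z, neg_zero, Finset.sum_const_zero]
    ring
  · rw [hI, w1, v3, M.sig_JI h.alt h.lin, (s _).1]
    simp only [M.IJ]
    change _ + M.sig M.K T X + _ = _
    rw [(s _).2, M.KI]
    ring
  · rw [hI, w2, v1, M.sig_KI h.alt h.lin, (s _).2]
    simp only [M.IK, T_neg2 h.alt h.lin, Finset.sum_neg_distrib]
    change _ + -M.sig M.J T X + _ = _
    rw [(s X).1, M.JI, n1]
    ring

theorem QT.gamJ (hn : 2 ≤ n) {M : AQH n C V} {T : V → V → V → C} {γI γJ γK : V → C}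
    (h : M.QT T γI γJ γK) : (2*((n:ℝ)-1)) • act1 M.J γJ
          = M.Lam M.I (M.d2 (M.omega M.I)) - act1 M.J (M.Lam M.K (M.d2 (M.omega M.I))) := by
  obtain ⟨lI, lJ, lK⟩ := h.lins hn
  funext X
  simp only [Pi.smul_apply, Pi.sub_apply, act1, Algebra.smul_def, map_mul, map_sub, map_ofNat,
    map_natCast, map_one]
  have a := (h.LamI hn X).1
  have b := (h.LamI hn (M.J X)).2.2
  simp only [M.IJ, M.KJ, (M.sig_lin h.lin M.I).neg] at b
  apply cancel2
  linear_combination -a - b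

theorem QT.gamK (hn : 2 ≤ n) {M : AQH n C V} {T : V → V → V → C} {γI γJ γK : V → C}
    (h : M.QT T γI γJ γK) : (2*((n:ℝ)-1)) • act1 M.K γK
          = M.Lam M.I (M.d2 (M.omega M.I)) + act1 M.K (M.Lam M.J (M.d2 (M.omega M.I))) := by
  obtain ⟨lI, lJ, lK⟩ := h.lins hn
  funext X
  simp only [Pi.smul_apply, Pi.add_apply, act1, Algebra.smul_def, map_mul, map_sub, map_ofNat,
    map_natCast, map_one]
  have a := (h.LamI hn X).1
  have b := (h.LamI hn (M.K X)).2.1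
  simp only [M.IK, M.JK, lJ.neg] at b
  apply cancel2
  linear_combination -a + b

end traces
end AQH

namespace AQH

section intrinsic

variable {n : ℕ} {C V : Type*} [CommRing C] [Algebra ℝ C] [AddCommGroup V] [Module C V]
  [Module ℝ V] [IsScalarTower ℝ C V]
variable (M : AQH n C V)

set_option linter.unusedSectionVars false
set_option linter.unusedSimpArgs false
set_option linter.unusedVariables false

theorem xi8 (X Y Z : V) : 8 * M.g Y (M.xi X Z)
    = 2 * (M.t M.I X (M.I Y) Z + M.t M.J X (M.J Y) Z + M.t M.K X (M.K Y) Z)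
      + 4 * (M.lambdaI X * M.g Y (M.I Z) + M.lambdaJ X * M.g Y (M.J Z)
        + M.lambdaK X * M.g Y (M.K Z)) := by
  have a := M.gI Y (M.nabA M.I X Z)
  have b := M.gJ Y (M.nabA M.J X Z)
  have c := M.gK Y (M.nabA M.K X Z)
  have q : (algebraMap ℝ C) (-(1/4)) = -(algebraMap ℝ C (1/2)) * (algebraMap ℝ C (1/2)) := by
    rw [neg_mul, ← map_mul, ← map_neg]; norm_num
  have q2 : 2 * (algebraMap ℝ C) (1/2) = 1 := by simpa using two_half (1 : C)
  have q4 : 4 * (algebraMap ℝ C (1/2) * algebraMap ℝ C (1/2)) = 1 := by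
    linear_combination (2 * algebraMap ℝ C (1/2) + 1) * q2
  simp only [xi, M.g_add2, M.g_rsmul2, M.g_smul2, t, q]
  linear_combination (-2) * (M.g Y (M.I (M.nabA M.I X Z)) + M.g Y (M.J (M.nabA M.J X Z))
      + M.g Y (M.K (M.nabA M.K X Z))) * q4
    - 2 * a - 2 * b - 2 * c
    + 4 * (M.lambdaI X * M.g Y (M.I Z) + M.lambdaJ X * M.g Y (M.J Z)
        + M.lambdaK X * M.g Y (M.K Z)) * q2

theorem lamI_tr (hn : 2 ≤ n) (X : V) :
    4 * n * M.lambdaI X = ∑ j, M.t M.J X (M.K (M.frame j)) (M.frame j) := by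
  have hr : (4 : C) * n = algebraMap ℝ C (4 * n) := by
    rw [map_mul, map_ofNat, map_natCast]
  have hnn : (n : ℝ) ≠ 0 := by positivity
  simp only [lambdaI, inner2, Algebra.smul_def, hr]
  rw [← mul_assoc, ← mul_assoc, ← map_mul, ← map_mul]
  have h1 : 4 * (n : ℝ) * (1 / (2 * n)) * (1 / 2) = 1 := by field_simp; norm_num
  rw [h1, map_one, one_mul, Finset.sum_comm]
  refine Finset.sum_congr rfl fun j _ => ?_
  have l : Lin1 (fun Y => M.t M.J X Y (M.frame j)) := by
    intro f Y Y'; exact M.cyc.tI_lin2 f X Y Y' _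
  rw [← M.sum_lin2 l]
  refine Finset.sum_congr rfl fun i _ => ?_
  rw [M.nab2_eq, omega, mul_comm]

theorem QT.lam_sub (hn : 2 ≤ n) {M : AQH n C V} {T : V → V → V → C} {γI γJ γK : V → C}
    (h : M.QT T γI γJ γK) (X : V) :
    4 * n * M.lambdaI X = 4 * n * γI X + M.sig M.I T X := by
  rw [M.lamI_tr hn]
  have a : ∀ i, 2 * M.t M.J X (M.K (M.frame i)) (M.frame i)
      = 2 * (γI X * M.g (M.frame i) (M.frame i)) + T X (M.K (M.frame i)) (M.J (M.frame i))
        + T X (M.I (M.frame i)) (M.frame i) := by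
    intro i
    have f := h.fJ X (M.K (M.frame i)) (M.frame i)
    change 2 * M.t M.J X (M.K (M.frame i)) (M.frame i)
      = 2 * (γI X * M.g (M.K (M.frame i)) (M.K (M.frame i))
          - γK X * M.g (M.K (M.frame i)) (M.I (M.frame i)))
        + T X (M.K (M.frame i)) (M.J (M.frame i)) + T X (M.J (M.K (M.frame i))) (M.frame i) at f
    simp only [M.gK, M.KK, M.KI, M.JK, M.g_neg2, M.g_J_self] at f
    linear_combination f
  apply cancel2
  rw [Finset.mul_sum, Finset.sum_congr rfl (fun i _ => a i)]
  simp only [Finset.sum_add_distrib, ← Finset.mul_sum, M.sum_gg, M.sig_KJ h.alt h.lin]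
  change _ + M.sig M.I T X = _
  ring

/-- `Σ_A Aθ ∧ ω_A` -/
def WW (θ : V → C) : V → V → V → C := fun X Y Z =>
  wedge12 (act1 M.I θ) (M.omega M.I) X Y Z + wedge12 (act1 M.J θ) (M.omega M.J) X Y Z
    + wedge12 (act1 M.K θ) (M.omega M.K) X Y Z

theorem WW_cyc (θ : V → C) : M.cyc.WW θ = M.WW θ := by
  funext X Y Z
  change wedge12 (act1 M.J θ) (M.omega M.J) X Y Z + wedge12 (act1 M.K θ) (M.omega M.K) X Y Z
    + wedge12 (act1 M.I θ) (M.omega M.I) X Y Z = _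
  simp only [WW]; ring

theorem omI_symm (X Y : V) : M.g Y (M.I X) = -M.g X (M.I Y) := by rw [M.g_symm, M.gI]
theorem omJ_symm (X Y : V) : M.g Y (M.J X) = -M.g X (M.J Y) := M.cyc.omI_symm X Y
theorem omK_symm (X Y : V) : M.g Y (M.K X) = -M.g X (M.K Y) := M.cyc.cyc.omI_symm X Y

theorem wedge_alt {ν : V → C} : IsAlt3 (wedge12 ν (M.omega M.I)) := by
  constructor
  · intro X Y Z
    simp only [wedge12, omega, M.omI_symm X Y]; ring
  · intro X Y Z
    simp only [wedge12, omega, M.omI_symm Y Z]; ring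

theorem wedge_lin {ν : V → C} (h : Lin1 ν) : Lin3 (wedge12 ν (M.omega M.I)) := by
  intro f X X' Y Z
  simp only [wedge12, omega, h f X X', M.g_add, M.g_smul]; ring

theorem IsAlt3.add {S T : V → V → V → C} (hS : IsAlt3 S) (hT : IsAlt3 T) :
    IsAlt3 (fun X Y Z => S X Y Z + T X Y Z) :=
  ⟨fun X Y Z => by simp only [hS.1 X Y Z, hT.1 X Y Z]; ring,
   fun X Y Z => by simp only [hS.2 X Y Z, hT.2 X Y Z]; ring⟩
theorem IsAlt3.mul {S : V → V → V → C} (hS : IsAlt3 S) (c : C) :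
    IsAlt3 (fun X Y Z => c * S X Y Z) :=
  ⟨fun X Y Z => by simp only [hS.1 X Y Z]; ring, fun X Y Z => by simp only [hS.2 X Y Z]; ring⟩
theorem Lin3.add {S T : V → V → V → C} (hS : Lin3 S) (hT : Lin3 T) :
    Lin3 (fun X Y Z => S X Y Z + T X Y Z) :=
  fun f X X' Y Z => by simp only [hS f X X' Y Z, hT f X X' Y Z]; ring
theorem Lin3.mul {S : V → V → V → C} (hS : Lin3 S) (c : C) :
    Lin3 (fun X Y Z => c * S X Y Z) :=
  fun f X X' Y Z => by simp only [hS f X X' Y Z]; ring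
theorem LI.add {M : AQH n C V} {S T : V → V → V → C} (hS : M.LI S) (hT : M.LI T) :
    M.LI (fun X Y Z => S X Y Z + T X Y Z) :=
  fun X Y Z => by simp only [← hS X Y Z, ← hT X Y Z]; ring
theorem LI.mul {M : AQH n C V} {S : V → V → V → C} (hS : M.LI S) (c : C) :
    M.LI (fun X Y Z => c * S X Y Z) :=
  fun X Y Z => by simp only [← hS X Y Z]; ring

theorem act_linI {θ : V → C} (h : Lin1 θ) : Lin1 (act1 M.I θ) := by
  intro f X X'; simp only [act1, M.I_lin, h f]; ring

theorem WW_alt (θ : V → C) : IsAlt3 (M.WW θ) :=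
  (M.wedge_alt.add M.cyc.wedge_alt).add M.cyc.cyc.wedge_alt

theorem WW_lin {θ : V → C} (h : Lin1 θ) : Lin3 (M.WW θ) :=
  ((M.wedge_lin (M.act_linI h)).add (M.cyc.wedge_lin (M.cyc.act_linI h))).add
    (M.cyc.cyc.wedge_lin (M.cyc.cyc.act_linI h))

theorem WW_LI {θ : V → C} (h : Lin1 θ) : M.LI (M.WW θ) := by
  intro X Y Z
  simp only [WW, wedge12, act1, omega, M.gI, M.gJ, M.gK, M.I_sq, M.IJ, M.JI, M.IK, M.KI, M.g_neg2,
    M.I_neg, M.J_neg, M.K_neg, h.neg, neg_neg]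
  ring

theorem WW_sig {θ : V → C} (h : Lin1 θ) (X : V) :
    M.sig M.I (M.WW θ) X = -(4 * n + 2) * θ (M.I X) := by
  have a : M.sig M.I (M.WW θ) X = M.sig M.I (wedge12 (act1 M.I θ) (M.omega M.I)) X
      + M.sig M.I (wedge12 (act1 M.J θ) (M.omega M.J)) X
      + M.sig M.I (wedge12 (act1 M.K θ) (M.omega M.K)) X := by
    simp only [sig, WW, Finset.sum_add_distrib]
  have w1 := M.wtr_I (M.act_linI h) X
  have w3 := M.cyc.wtr_K (M.cyc.act_linI h) X
  have v2 := M.cyc.cyc.wtr_J (M.cyc.cyc.act_linI h) X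
  change M.sig M.I (wedge12 (act1 M.J θ) (M.omega M.J)) X = 2 * act1 M.J θ (M.K X) at w3
  change M.sig M.I (wedge12 (act1 M.K θ) (M.omega M.K)) X = -2 * act1 M.K θ (M.J X) at v2
  rw [a, w1, w3, v2]
  simp only [act1, M.JK, M.KJ, h.neg]
  ring

theorem EH_eq {θ : V → C} (X Y Z : V) : M.xiEH3 θ X Y Z
    = 3 * (M.g X Y * θ Z - M.g X Z * θ Y)
      + (M.g X (M.I Y) * act1 M.I θ Z - M.g X (M.I Z) * act1 M.I θ Y)
      + (M.g X (M.J Y) * act1 M.J θ Z - M.g X (M.J Z) * act1 M.J θ Y)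
      + (M.g X (M.K Y) * act1 M.K θ Z - M.g X (M.K Z) * act1 M.K θ Y)
      - algebraMap ℝ C (2 / n) * (act1 M.I θ X * M.g Y (M.I Z) + act1 M.J θ X * M.g Y (M.J Z)
        + act1 M.K θ X * M.g Y (M.K Z)) := by
  have s : ∀ (P Q : V) (a b : C), ∑ i, M.g (M.frame i) X * (M.g (M.frame i) P * a
      - M.g (M.frame i) Q * b) = M.g X P * a - M.g X Q * b := by
    intro P Q a b
    exact M.sum_lin2 (ν := fun W => M.g W P * a - M.g W Q * b)
      (by intro f W W'; simp only [M.g_add, M.g_smul]; ring) X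
  have sn : ∀ (P Q : V) (a b : C), ∑ i, M.g (M.frame i) X * (-M.g (M.frame i) P * a
      - -M.g (M.frame i) Q * b) = -M.g X P * a + M.g X Q * b := by
    intro P Q a b
    have := M.sum_lin2 (ν := fun W => -M.g W P * a - -M.g W Q * b)
      (by intro f W W'; simp only [M.g_add, M.g_smul]; ring) X
    rw [this]; ring
  simp only [xiEH3, M.gI, M.gJ, M.gK, s, sn, Algebra.smul_def, omega, map_ofNat]
  ring

theorem WW_op {θ : V → C} (h : Lin1 θ) (X Y Z : V) :
    3 * M.WW θ X Y Z - (M.WW θ X (M.I Y) (M.I Z) + M.WW θ X (M.J Y) (M.J Z)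
      + M.WW θ X (M.K Y) (M.K Z))
    = 3 * (M.g X Y * θ Z - M.g X Z * θ Y)
      + (M.g X (M.I Y) * act1 M.I θ Z - M.g X (M.I Z) * act1 M.I θ Y)
      + (M.g X (M.J Y) * act1 M.J θ Z - M.g X (M.J Z) * act1 M.J θ Y)
      + (M.g X (M.K Y) * act1 M.K θ Z - M.g X (M.K Z) * act1 M.K θ Y)
      + 4 * (act1 M.I θ X * M.g Y (M.I Z) + act1 M.J θ X * M.g Y (M.J Z)
        + act1 M.K θ X * M.g Y (M.K Z)) := by
  simp only [WW, wedge12, act1, omega, M.gI, M.gJ, M.gK, M.I_sq, M.J_sq, M.KK, M.IJ, M.JI, M.IK,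
    M.KI, M.JK, M.KJ, M.g_neg2, M.I_neg, M.J_neg, M.K_neg, h.neg, neg_neg]
  ring

/-- the key identity between the two descriptions of the intrinsic torsion -/
theorem key_id {θ : V → C} (h : Lin1 θ) (ψ T : V → V → V → C)
    (hT : ∀ X Y Z, T X Y Z = -8 * ψ X Y Z - 8 * M.WW θ X Y Z) (X Y Z : V) :
    8 * (M.xiKH3 ψ X Y Z + M.xiEH3 θ X Y Z)
      = -(3 * T X Y Z - (T X (M.I Y) (M.I Z) + T X (M.J Y) (M.J Z) + T X (M.K Y) (M.K Z)))
        - 8 * algebraMap ℝ C (4 + 2 / n) * (act1 M.I θ X * M.g Y (M.I Z)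
          + act1 M.J θ X * M.g Y (M.J Z) + act1 M.K θ X * M.g Y (M.K Z)) := by
  have w := M.WW_op h X Y Z
  rw [M.EH_eq]
  simp only [xiKH3, op23, Algebra.smul_def, map_add, map_ofNat, hT]
  linear_combination (-8) * w

/-- the pointwise hypothesis used to reconstruct the torsion -/
def Hyp (T : V → V → V → C) (θ : V → C) (c : C) : Prop := ∀ X Y Z,
  2 * (M.t M.I X (M.I Y) Z + M.t M.J X (M.J Y) Z + M.t M.K X (M.K Y) Z)
      + 4 * (M.lambdaI X * M.g Y (M.I Z) + M.lambdaJ X * M.g Y (M.J Z)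
        + M.lambdaK X * M.g Y (M.K Z))
    = -(3 * T X Y Z - (T X (M.I Y) (M.I Z) + T X (M.J Y) (M.J Z) + T X (M.K Y) (M.K Z)))
        - 8 * c * (act1 M.I θ X * M.g Y (M.I Z)
          + act1 M.J θ X * M.g Y (M.J Z) + act1 M.K θ X * M.g Y (M.K Z))

theorem Hyp.rot {M : AQH n C V} {T : V → V → V → C} {θ : V → C} {c : C} (h : M.Hyp T θ c) :
    M.cyc.Hyp T θ c := by
  intro X Y Z
  have k := h X Y Z
  change 2 * (M.t M.J X (M.J Y) Z + M.t M.K X (M.K Y) Z + M.t M.I X (M.I Y) Z)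
      + 4 * (M.lambdaJ X * M.g Y (M.J Z) + M.lambdaK X * M.g Y (M.K Z)
        + M.lambdaI X * M.g Y (M.I Z))
    = -(3 * T X Y Z - (T X (M.J Y) (M.J Z) + T X (M.K Y) (M.K Z) + T X (M.I Y) (M.I Z)))
        - 8 * c * (act1 M.J θ X * M.g Y (M.J Z)
          + act1 M.K θ X * M.g Y (M.K Z) + act1 M.I θ X * M.g Y (M.I Z))
  linear_combination k

theorem Hyp.tfi {M : AQH n C V} {T : V → V → V → C} {θ : V → C} {c : C} (h : M.Hyp T θ c)
    (alt : IsAlt3 T) (lin : Lin3 T) :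
    M.TFI T (fun X => M.lambdaJ X + 2 * c * act1 M.J θ X)
      (fun X => M.lambdaK X + 2 * c * act1 M.K θ X) := by
  intro X Y Z
  have a := h X Y (M.I Z)
  have b := h X (M.I Y) Z
  have e1 := M.tI_eq X Y Z
  have e2 := M.tJ_eq X (M.K Y) Z
  have e3 := M.tJ_JJ X Y (M.K Z)
  have e4 := M.tI_II X Y Z
  simp only [M.I_sq, M.J_sq, M.KK, M.IJ, M.JI, M.IK, M.KI, M.JK, M.KJ, M.gI, M.gJ, M.gK, M.g_neg2,
    M.tI_neg2, M.tI_neg3, M.tJ_neg2, M.tJ_neg3, M.tK_neg2, M.tK_neg3, T_neg2 alt lin, T_neg3 alt lin,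
    neg_neg] at a b e1 e2 e3 e4
  apply cancel4
  linear_combination -a - b + 2 * e4 + 2 * e3 - 2 * e2 + 2 * e1

theorem QT_of_KEH (h : M.inKEH) : ∃ T γI γJ γK, M.QT T γI γJ γK := by
  obtain ⟨ψ, θ, ⟨alt, lin, lI, lJ, lK, _⟩, hθ, hx⟩ := h
  let T : V → V → V → C := fun X Y Z => -8 * ψ X Y Z + -8 * M.WW θ X Y Z
  have aT : IsAlt3 T := (alt.mul (-8)).add ((M.WW_alt θ).mul (-8))
  have lT : Lin3 T := (lin.mul (-8)).add ((M.WW_lin hθ).mul (-8))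
  have hI : M.LI ψ := fun X Y Z => congrFun (congrFun (congrFun lI X) Y) Z
  have hJ : M.cyc.LI ψ := fun X Y Z => congrFun (congrFun (congrFun lJ X) Y) Z
  have hK : M.cyc.cyc.LI ψ := fun X Y Z => congrFun (congrFun (congrFun lK X) Y) Z
  have wJ : M.cyc.LI (M.WW θ) := by have := M.cyc.WW_LI hθ; rwa [M.WW_cyc] at this
  have wK : M.cyc.cyc.LI (M.WW θ) := by
    have := M.cyc.cyc.WW_LI hθ; rwa [M.cyc.WW_cyc, M.WW_cyc] at this
  have H : M.Hyp T θ (algebraMap ℝ C (4 + 2 / n)) := by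
    intro X Y Z
    rw [← M.xi8, hx]
    exact M.key_id hθ ψ T (fun X Y Z => by simp only [T]; ring) X Y Z
  exact ⟨T, _, _, _, aT, lT, (hI.mul (-8)).add ((M.WW_LI hθ).mul (-8)),
    (hJ.mul (-8)).add (wJ.mul (-8)), (hK.mul (-8)).add (wK.mul (-8)),
    H.tfi aT lT, H.rot.tfi aT lT, H.rot.rot.tfi aT lT⟩

theorem calL_of_LI {T : V → V → V → C} (h : M.LI T) : calL M.I T = T := by
  funext X Y Z; exact h X Y Z

theorem QT.inKEH (hn : 2 ≤ n) {M : AQH n C V} {T : V → V → V → C} {γI γJ γK : V → C}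
    (h : M.QT T γI γJ γK) : M.inKEH := by
  have hnn : (n : ℝ) ≠ 0 := by positivity
  have hn2 : (8 * (4 * (n : ℝ) + 2)) ≠ 0 := by positivity
  let q : C := algebraMap ℝ C (-1 / (8 * (4 * n + 2)))
  have hq : 8 * (4 * n + 2) * q = -1 := by
    have : (8 * (4 * n + 2) : C) = algebraMap ℝ C (8 * (4 * n + 2)) := by
      rw [map_mul, map_add, map_mul, map_ofNat, map_ofNat, map_ofNat, map_natCast]
    rw [this, ← map_mul, mul_div_cancel₀ _ hn2]; simp
  let θ : V → C := fun X => q * M.sig M.I T (M.I X)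
  have hs := M.sig_lin h.lin M.I
  have hθ : Lin1 θ := by
    intro f X X'
    simp only [θ, M.I_lin, hs f]; ring
  have sg := h.sigs
  have r1 : ∀ X, M.sig M.I T X = 8 * (4 * n + 2) * θ (M.I X) := by
    intro X
    simp only [θ, M.I_sq, hs.neg]
    linear_combination M.sig M.I T X * hq
  have r2 : ∀ X, M.sig M.J T X = 8 * (4 * n + 2) * θ (M.J X) := by
    intro X
    simp only [θ, M.IJ, (sg X).1]
    linear_combination (-M.sig M.I T (M.K X)) * hq
  have r3 : ∀ X, M.sig M.K T X = 8 * (4 * n + 2) * θ (M.K X) := by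
    intro X
    simp only [θ, M.IK, (sg X).2, hs.neg]
    linear_combination M.sig M.I T (M.J X) * hq
  let ei : C := algebraMap ℝ C (1/8)
  have he : 8 * ei = 1 := by
    have : (8 : C) = algebraMap ℝ C 8 := by rw [map_ofNat]
    rw [this, ← map_mul]; norm_num
  let ψ : V → V → V → C := fun X Y Z => -ei * T X Y Z + -1 * M.WW θ X Y Z
  have aψ : IsAlt3 ψ := (h.alt.mul _).add ((M.WW_alt θ).mul _)
  have lψ : Lin3 ψ := (h.lin.mul _).add ((M.WW_lin hθ).mul _)
  have wJ : M.cyc.LI (M.WW θ) := by have := M.cyc.WW_LI hθ; rwa [M.WW_cyc] at this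
  have wK : M.cyc.cyc.LI (M.WW θ) := by
    have := M.cyc.cyc.WW_LI hθ; rwa [M.cyc.WW_cyc, M.WW_cyc] at this
  have s1 := M.WW_sig hθ
  have s2 := M.cyc.WW_sig hθ
  have s3 := M.cyc.cyc.WW_sig hθ
  rw [M.cyc.WW_cyc, M.WW_cyc] at s3
  rw [M.WW_cyc] at s2
  have sψ : ∀ A X, M.sig A ψ X = -ei * M.sig A T X + -1 * M.sig A (M.WW θ) X := by
    intro A X
    simp only [sig, ψ, Finset.sum_add_distrib, Finset.mul_sum]
  have L0 : ∀ A : V → V, (∀ X, M.sig A T X = 8 * (4 * n + 2) * θ (A X)) →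
      (∀ X, M.sig A (M.WW θ) X = -(4 * n + 2) * θ (A X)) → M.Lam A ψ = 0 := by
    intro A a b
    funext X
    apply cancel2
    rw [M.two_Lam _ _ _ (fun Z => lin_2 aψ lψ X Z), sψ, a, b]
    simp only [Pi.zero_apply]
    linear_combination (-(4 * n + 2) * θ (A X)) * he
  have hc : (n : C) * algebraMap ℝ C (4 + 2 / n) = 4 * n + 2 := by
    have : (n : C) = algebraMap ℝ C n := by simp
    rw [this, ← map_mul]
    have : (n : ℝ) * (4 + 2 / n) = 4 * n + 2 := by field_simp
    rw [this, map_add, map_mul, map_ofNat, map_ofNat, map_natCast]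
  have g1 := h.lam_sub hn
  have g2 := h.rot.lam_sub hn
  have g3 := h.rot.rot.lam_sub hn
  change ∀ X, 4 * n * M.lambdaJ X = 4 * n * γJ X + M.sig M.J T X at g2
  change ∀ X, 4 * n * M.lambdaK X = 4 * n * γK X + M.sig M.K T X at g3
  have e : ∀ (A : V → V) (l γ s : V → C), (∀ X, 4 * n * l X = 4 * n * γ X + s X) →
      (∀ X, s X = 8 * (4 * n + 2) * θ (A X)) → ∀ X,
      4 * (l X - γ X) = -8 * algebraMap ℝ C (4 + 2 / n) * act1 A θ X := by
    intro A l γ s a b X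
    apply rcancel (C := C) n hnn
    simp only [map_natCast, act1]
    linear_combination a X + b X - 8 * θ (A X) * hc
  have e1 := e M.I _ _ _ g1 r1
  have e2 := e M.J _ _ _ g2 r2
  have e3 := e M.K _ _ _ g3 r3
  refine ⟨ψ, θ, ⟨aψ, lψ, M.calL_of_LI ((h.lI.mul _).add ((M.WW_LI hθ).mul _)),
    M.cyc.calL_of_LI ((h.lJ.mul _).add (wJ.mul _)),
    M.cyc.cyc.calL_of_LI ((h.lK.mul _).add (wK.mul _)),
    L0 M.I r1 s1, L0 M.J r2 s2, L0 M.K r3 s3⟩, hθ, ?_⟩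
  intro X Y Z
  apply cancel8
  rw [M.key_id hθ ψ T, M.xi8]
  · have f1 := h.fI X (M.I Y) Z
    have f2 : 2 * M.t M.J X (M.J Y) Z = 2 * (γI X * M.g (M.J Y) (M.K Z)
      - γK X * M.g (M.J Y) (M.I Z)) + T X (M.J Y) (M.J Z) + T X (M.J (M.J Y)) Z :=
      h.fJ X (M.J Y) Z
    have f3 : 2 * M.t M.K X (M.K Y) Z = 2 * (γJ X * M.g (M.K Y) (M.I Z)
      - γI X * M.g (M.K Y) (M.J Z)) + T X (M.K Y) (M.K Z) + T X (M.K (M.K Y)) Z :=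
      h.fK X (M.K Y) Z
    simp only [M.I_sq, M.J_sq, M.KK, M.IJ, M.JI, M.IK, M.KI, M.JK, M.KJ, M.gI, M.gJ, M.gK, M.g_neg2,
      T_neg2 h.alt h.lin, neg_neg] at f1 f2 f3
    linear_combination f1 + f2 + f3 + M.g Y (M.I Z) * e1 X + M.g Y (M.J Z) * e2 X
      + M.g Y (M.K Z) * e3 X
  · intro X Y Z
    simp only [ψ]
    linear_combination (-T X Y Z) * he

end intrinsic
end AQH

namespace AQH

section converse

variable {n : ℕ} {C V : Type*} [CommRing C] [Algebra ℝ C] [AddCommGroup V] [Module C V]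
  [Module ℝ V] [IsScalarTower ℝ C V]
variable (M : AQH n C V)

set_option linter.unusedSectionVars false
set_option linter.unusedSimpArgs false
set_option linter.unusedVariables false

/-- the three-form `I dω_I + J(Kγ_K) ∧ ω_J + K(Jγ_J) ∧ ω_K` -/
def TI (γJ γK : V → C) : V → V → V → C := fun X Y Z =>
  act3 M.I (M.d2 (M.omega M.I)) X Y Z
      + wedge12 (act1 M.J (act1 M.K γK)) (M.omega M.J) X Y Z
      + wedge12 (act1 M.K (act1 M.J γJ)) (M.omega M.K) X Y Z

/-- the corrected covariant derivative -/
def sI (γJ γK : V → C) (X Y Z : V) : C :=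
  M.t M.I X Y Z - (γK X * M.g Y (M.J Z) - γJ X * M.g Y (M.K Z))

theorem actd_alt : IsAlt3 (act3 M.I (M.d2 (M.omega M.I))) := by
  constructor
  · intro X Y Z
    simp only [act3, M.d2_I]
    rw [M.tI_skew (M.I Y), M.tI_skew (M.I X) (M.I Z), M.tI_skew (M.I Z)]; ring
  · intro X Y Z
    simp only [act3, M.d2_I]
    rw [M.tI_skew (M.I Y), M.tI_skew (M.I X) (M.I Z), M.tI_skew (M.I Z)]; ring

theorem actd_lin : Lin3 (act3 M.I (M.d2 (M.omega M.I))) := by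
  intro f X X' Y Z
  simp only [act3, M.d2_I, M.I_lin, M.tI_lin1, M.tI_lin2, M.tI_lin3]; ring

theorem TI_alt (γJ γK : V → C) : IsAlt3 (M.TI γJ γK) :=
  (M.actd_alt.add M.cyc.wedge_alt).add M.cyc.cyc.wedge_alt

theorem TI_lin {γJ γK : V → C} (hJ : Lin1 γJ) (hK : Lin1 γK) : Lin3 (M.TI γJ γK) :=
  (M.actd_lin.add (M.cyc.wedge_lin (M.cyc.act_linI (M.cyc.cyc.act_linI hK)))).add
    (M.cyc.cyc.wedge_lin (M.cyc.cyc.act_linI (M.cyc.act_linI hJ)))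

theorem sI_sum {γJ γK : V → C} (hJ : Lin1 γJ) (hK : Lin1 γK) (X Y Z : V) :
    M.sI γJ γK X Y Z + M.sI γJ γK Y Z X + M.sI γJ γK Z X Y
      = M.TI γJ γK (M.I X) (M.I Y) (M.I Z) := by
  simp only [TI, sI, act3, M.d2_I, wedge12, act1, omega, M.I_sq, M.J_sq, M.KK, M.IJ, M.JI, M.IK, M.KI, M.JK,
    M.KJ, M.gI, M.g_neg2, M.I_neg, M.J_neg, M.K_neg, hJ.neg, hK.neg, M.tI_neg1, M.tI_neg2,
    M.tI_neg3, M.omJ_symm X Z, M.omK_symm X Z]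
  ring

theorem sI_skew (γJ γK : V → C) (X Y Z : V) : M.sI γJ γK X Y Z = -M.sI γJ γK X Z Y := by
  simp only [sI]
  rw [M.tI_skew X Y Z, M.omJ_symm Z Y, M.omK_symm Z Y]; ring

theorem sI_neg2 (γJ γK : V → C) (X Y Z : V) : M.sI γJ γK X (-Y) Z = -M.sI γJ γK X Y Z := by
  simp only [sI, M.tI_neg2, M.g_neg]; ring

theorem half {T : V → V → V → C} {γI γJ γK : V → C} (alt : IsAlt3 T) (lin : Lin3 T)
    (hI : Lin1 γI) (hJ : Lin1 γJ) (hK : Lin1 γK) (eI : M.TI γJ γK = T)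
    (eJ : M.cyc.TI γK γI = T) (eK : M.cyc.cyc.TI γI γJ = T) : M.LI T ∧ M.TFI T γJ γK := by
  have h := M.core T (M.sI γJ γK) (M.cyc.sI γK γI) (M.cyc.cyc.sI γI γJ) alt
    (T_neg1 lin) (M.sI_skew _ _) (M.cyc.sI_skew _ _) (M.cyc.cyc.sI_skew _ _)
    (by intro X Y Z; simp only [sI, M.tI_neg1, hJ.neg, hK.neg]; ring)
    (M.sI_neg2 _ _) (M.cyc.sI_neg2 _ _) (M.cyc.cyc.sI_neg2 _ _)
    (by
      intro X Y Z
      simp only [sI, M.tI_II, M.gI, M.JI, M.KI, M.g_neg2, M.I_neg, M.IK, M.IJ]; ring)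
    (by
      intro X Y Z
      change M.t M.J X Y Z - (γI X * M.g Y (M.K Z) - γK X * M.g Y (M.I Z))
        = M.t M.K X Y (M.I Z) - (γJ X * M.g Y (M.I (M.I Z)) - γI X * M.g Y (M.J (M.I Z)))
          - (M.t M.I X (M.K Y) Z - (γK X * M.g (M.K Y) (M.J Z) - γJ X * M.g (M.K Y) (M.K Z)))
      rw [M.tJ_eq]
      simp only [M.I_sq, M.JI, M.gK, M.KJ, M.KK, M.g_neg2]; ring)
    (fun X Y Z => (M.sI_sum hJ hK X Y Z).trans (by rw [eI]))
    (fun X Y Z => (M.cyc.sI_sum hK hI X Y Z).trans (by rw [eJ]; rfl))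
    (fun X Y Z => (M.cyc.cyc.sI_sum hI hJ X Y Z).trans (by rw [eK]; rfl))
  refine ⟨h.1, ?_⟩
  intro X Y Z
  have k := h.2 X Y Z
  simp only [sI] at k
  linear_combination k

theorem QT_of_eqs {γI γJ γK : V → C} (hI : Lin1 γI) (hJ : Lin1 γJ) (hK : Lin1 γK)
    (eJ : M.cyc.TI γK γI = M.TI γJ γK) (eK : M.cyc.cyc.TI γI γJ = M.TI γJ γK) :
    M.QT (M.TI γJ γK) γI γJ γK := by
  have alt := M.TI_alt γJ γK
  have lin := M.TI_lin hJ hK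
  obtain ⟨a1, b1⟩ := M.half alt lin hI hJ hK rfl eJ eK
  obtain ⟨a2, b2⟩ := M.cyc.half alt lin hJ hK hI eJ eK rfl
  obtain ⟨a3, b3⟩ := M.cyc.cyc.half alt lin hK hI hJ eK rfl eJ
  exact ⟨alt, lin, a1, a2, a3, b1, b2, b3⟩

end converse
end AQH

open AQH in
/-- An almost quaternion-Hermitian manifold of dimension
`4n ≥ 8` is QKT iff for the local adapted basis `I, J, K` there are local
one-forms `γ_I, γ_J, γ_K` with
`β_J - β_I = I dω_I - J dω_J = I(Kγ_K) ∧ ω_I - J(Kγ_K) ∧ ω_J + Kγ_K⁻ ∧ ω_K`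
(`γ_K⁻ = Iγ_I - Jγ_J`), together with the cyclic permutations.  In this case the
torsion three-form `T` satisfies
`2T = 2(I dω_I + J(Kγ_K) ∧ ω_J + K(Jγ_J) ∧ ω_K)
    = β_I + J(Iγ_I) ∧ ω_J + K(Iγ_I) ∧ ω_K + Iγ_I⁺ ∧ ω_I` (and cyclically), with
`2(n-1) Iγ_I = (Λ_J + IΛ_K) dω_J = (Λ_K - IΛ_J) dω_K` (and cyclically). -/
theorem statement17 {n : ℕ} {C V : Type*} [CommRing C] [Algebra ℝ C] [AddCommGroup V]
    [Module C V] [Module ℝ V] [IsScalarTower ℝ C V]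
    (hn : 2 ≤ n) (M : AQH n C V) :
    (M.inKEH ↔ ∃ γI γJ γK : V → C, Lin1 γI ∧ Lin1 γJ ∧ Lin1 γK ∧
      -- `β_J - β_I = I dω_I - J dω_J = I(Kγ_K) ∧ ω_I - J(Kγ_K) ∧ ω_J + Kγ_K⁻ ∧ ω_K`
      (M.betaJ - M.betaI
          = act3 M.I (M.d2 (M.omega M.I)) - act3 M.J (M.d2 (M.omega M.J)) ∧
        act3 M.I (M.d2 (M.omega M.I)) - act3 M.J (M.d2 (M.omega M.J))
          = wedge12 (act1 M.I (act1 M.K γK)) (M.omega M.I)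
            - wedge12 (act1 M.J (act1 M.K γK)) (M.omega M.J)
            + wedge12 (act1 M.K (fun W => act1 M.I γI W - act1 M.J γJ W)) (M.omega M.K)) ∧
      -- cyclic permutation `(I,J,K) → (J,K,I)`
      (M.betaK - M.betaJ
          = act3 M.J (M.d2 (M.omega M.J)) - act3 M.K (M.d2 (M.omega M.K)) ∧
        act3 M.J (M.d2 (M.omega M.J)) - act3 M.K (M.d2 (M.omega M.K))
          = wedge12 (act1 M.J (act1 M.I γI)) (M.omega M.J)
            - wedge12 (act1 M.K (act1 M.I γI)) (M.omega M.K)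
            + wedge12 (act1 M.I (fun W => act1 M.J γJ W - act1 M.K γK W)) (M.omega M.I)) ∧
      -- cyclic permutation `(I,J,K) → (K,I,J)`
      (M.betaI - M.betaK
          = act3 M.K (M.d2 (M.omega M.K)) - act3 M.I (M.d2 (M.omega M.I)) ∧
        act3 M.K (M.d2 (M.omega M.K)) - act3 M.I (M.d2 (M.omega M.I))
          = wedge12 (act1 M.K (act1 M.J γJ)) (M.omega M.K)
            - wedge12 (act1 M.I (act1 M.J γJ)) (M.omega M.I)
            + wedge12 (act1 M.J (fun W => act1 M.K γK W - act1 M.I γI W)) (M.omega M.J))) ∧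
    -- in the QKT case, for the torsion three-form `T` of the QKT connection
    (∀ (T : V → V → V → C) (γI γJ γK : V → C),
      (IsAlt3 T ∧ Lin3 T ∧ calL M.I T = T ∧ calL M.J T = T ∧ calL M.K T = T ∧
        M.MetricConn (M.nabT T) ∧ M.QuatConn (M.nabT T) γI γJ γK) →
      -- `2T = 2(I dω_I + J(Kγ_K) ∧ ω_J + K(Jγ_J) ∧ ω_K)`, and cyclically
      ((2:ℝ) • T = (2:ℝ) • (act3 M.I (M.d2 (M.omega M.I))
          + wedge12 (act1 M.J (act1 M.K γK)) (M.omega M.J)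
          + wedge12 (act1 M.K (act1 M.J γJ)) (M.omega M.K))) ∧
      ((2:ℝ) • T = (2:ℝ) • (act3 M.J (M.d2 (M.omega M.J))
          + wedge12 (act1 M.K (act1 M.I γI)) (M.omega M.K)
          + wedge12 (act1 M.I (act1 M.K γK)) (M.omega M.I))) ∧
      ((2:ℝ) • T = (2:ℝ) • (act3 M.K (M.d2 (M.omega M.K))
          + wedge12 (act1 M.I (act1 M.J γJ)) (M.omega M.I)
          + wedge12 (act1 M.J (act1 M.I γI)) (M.omega M.J))) ∧
      -- `2T = β_I + J(Iγ_I) ∧ ω_J + K(Iγ_I) ∧ ω_K + Iγ_I⁺ ∧ ω_I`, and cyclically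
      ((2:ℝ) • T = M.betaI
          + wedge12 (act1 M.J (act1 M.I γI)) (M.omega M.J)
          + wedge12 (act1 M.K (act1 M.I γI)) (M.omega M.K)
          + wedge12 (act1 M.I (fun W => act1 M.J γJ W + act1 M.K γK W)) (M.omega M.I)) ∧
      ((2:ℝ) • T = M.betaJ
          + wedge12 (act1 M.K (act1 M.J γJ)) (M.omega M.K)
          + wedge12 (act1 M.I (act1 M.J γJ)) (M.omega M.I)
          + wedge12 (act1 M.J (fun W => act1 M.K γK W + act1 M.I γI W)) (M.omega M.J)) ∧
      ((2:ℝ) • T = M.betaK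
          + wedge12 (act1 M.I (act1 M.K γK)) (M.omega M.I)
          + wedge12 (act1 M.J (act1 M.K γK)) (M.omega M.J)
          + wedge12 (act1 M.K (fun W => act1 M.I γI W + act1 M.J γJ W)) (M.omega M.K)) ∧
      -- `2(n-1) Iγ_I = (Λ_J + IΛ_K) dω_J = (Λ_K - IΛ_J) dω_K`, and cyclically
      ((2*((n:ℝ)-1)) • act1 M.I γI
          = M.Lam M.J (M.d2 (M.omega M.J)) + act1 M.I (M.Lam M.K (M.d2 (M.omega M.J)))) ∧
      ((2*((n:ℝ)-1)) • act1 M.I γI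
          = M.Lam M.K (M.d2 (M.omega M.K)) - act1 M.I (M.Lam M.J (M.d2 (M.omega M.K)))) ∧
      ((2*((n:ℝ)-1)) • act1 M.J γJ
          = M.Lam M.K (M.d2 (M.omega M.K)) + act1 M.J (M.Lam M.I (M.d2 (M.omega M.K)))) ∧
      ((2*((n:ℝ)-1)) • act1 M.J γJ
          = M.Lam M.I (M.d2 (M.omega M.I)) - act1 M.J (M.Lam M.K (M.d2 (M.omega M.I)))) ∧
      ((2*((n:ℝ)-1)) • act1 M.K γK
          = M.Lam M.I (M.d2 (M.omega M.I)) + act1 M.K (M.Lam M.J (M.d2 (M.omega M.I)))) ∧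
      ((2*((n:ℝ)-1)) • act1 M.K γK
          = M.Lam M.J (M.d2 (M.omega M.J)) - act1 M.K (M.Lam M.I (M.d2 (M.omega M.J))))) := by
  refine ⟨⟨?_, ?_⟩, ?_⟩
  · intro h
    obtain ⟨T, γI, γJ, γK, q⟩ := M.QT_of_KEH h
    obtain ⟨lI, lJ, lK⟩ := q.lins hn
    have e1 := q.eqT hn
    have e2 := fun X Y Z => show T X Y Z = act3 M.J (M.d2 (M.omega M.J)) X Y Z
      + wedge12 (act1 M.K (act1 M.I γI)) (M.omega M.K) X Y Z
      + wedge12 (act1 M.I (act1 M.K γK)) (M.omega M.I) X Y Z from q.rot.eqT hn X Y Z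
    have e3 := fun X Y Z => show T X Y Z = act3 M.K (M.d2 (M.omega M.K)) X Y Z
      + wedge12 (act1 M.I (act1 M.J γJ)) (M.omega M.I) X Y Z
      + wedge12 (act1 M.J (act1 M.I γI)) (M.omega M.J) X Y Z from q.rot.rot.eqT hn X Y Z
    refine ⟨γI, γJ, γK, lI, lJ, lK, ⟨?_, ?_⟩, ⟨?_, ?_⟩, ⟨?_, ?_⟩⟩
    · funext X Y Z
      simp only [Pi.sub_apply, betaI, betaJ]; ring
    · funext X Y Z
      have a := e1 X Y Z
      have b := e2 X Y Z
      simp only [Pi.sub_apply, Pi.add_apply]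
      simp only [wedge12, act1] at a b ⊢
      linear_combination b - a
    · funext X Y Z
      simp only [Pi.sub_apply, betaJ, betaK]; ring
    · funext X Y Z
      have a := e2 X Y Z
      have b := e3 X Y Z
      simp only [Pi.sub_apply, Pi.add_apply]
      simp only [wedge12, act1] at a b ⊢
      linear_combination b - a
    · funext X Y Z
      simp only [Pi.sub_apply, betaI, betaK]; ring
    · funext X Y Z
      have a := e3 X Y Z
      have b := e1 X Y Z
      simp only [Pi.sub_apply, Pi.add_apply]
      simp only [wedge12, act1] at a b ⊢
      linear_combination b - a
  · rintro ⟨γI, γJ, γK, lI, lJ, lK, ⟨_, h1⟩, ⟨_, h2⟩, ⟨_, h3⟩⟩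
    have eJ : M.cyc.TI γK γI = M.TI γJ γK := by
      funext X Y Z
      change act3 M.J (M.d2 (M.omega M.J)) X Y Z
        + wedge12 (act1 M.K (act1 M.I γI)) (M.omega M.K) X Y Z
        + wedge12 (act1 M.I (act1 M.K γK)) (M.omega M.I) X Y Z = _
      have a := congrFun (congrFun (congrFun h1 X) Y) Z
      simp only [Pi.sub_apply, Pi.add_apply] at a
      simp only [TI]
      simp only [wedge12, act1] at a ⊢
      linear_combination -a
    have eK : M.cyc.cyc.TI γI γJ = M.TI γJ γK := by
      funext X Y Z
      change act3 M.K (M.d2 (M.omega M.K)) X Y Z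
        + wedge12 (act1 M.I (act1 M.J γJ)) (M.omega M.I) X Y Z
        + wedge12 (act1 M.J (act1 M.I γI)) (M.omega M.J) X Y Z = _
      have a := congrFun (congrFun (congrFun h3 X) Y) Z
      simp only [Pi.sub_apply, Pi.add_apply] at a
      simp only [TI]
      simp only [wedge12, act1] at a ⊢
      linear_combination a
    exact (M.QT_of_eqs lI lJ lK eJ eK).inKEH hn
  · intro T γI γJ γK h
    have q := M.QT_of_conn h
    have e1 := q.eqT hn
    have e2 := fun X Y Z => show T X Y Z = act3 M.J (M.d2 (M.omega M.J)) X Y Z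
      + wedge12 (act1 M.K (act1 M.I γI)) (M.omega M.K) X Y Z
      + wedge12 (act1 M.I (act1 M.K γK)) (M.omega M.I) X Y Z from q.rot.eqT hn X Y Z
    have e3 := fun X Y Z => show T X Y Z = act3 M.K (M.d2 (M.omega M.K)) X Y Z
      + wedge12 (act1 M.I (act1 M.J γJ)) (M.omega M.I) X Y Z
      + wedge12 (act1 M.J (act1 M.I γI)) (M.omega M.J) X Y Z from q.rot.rot.eqT hn X Y Z
    refine ⟨?_, ?_, ?_, ?_, ?_, ?_, q.rot.gamK hn, q.rot.rot.gamJ hn, q.rot.rot.gamK hn,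
      q.gamJ hn, q.gamK hn, q.rot.gamJ hn⟩
    · congr 1; funext X Y Z; exact e1 X Y Z
    · congr 1; funext X Y Z; exact e2 X Y Z
    · congr 1; funext X Y Z; exact e3 X Y Z
    · funext X Y Z
      have a := e2 X Y Z
      have b := e3 X Y Z
      simp only [Pi.smul_apply, Pi.add_apply, betaI, Algebra.smul_def, map_ofNat]
      simp only [wedge12, act1] at a b ⊢
      linear_combination a + b
    · funext X Y Z
      have a := e3 X Y Z
      have b := e1 X Y Z
      simp only [Pi.smul_apply, Pi.add_apply, betaJ, Algebra.smul_def, map_ofNat]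
      simp only [wedge12, act1] at a b ⊢
      linear_combination a + b
    · funext X Y Z
      have a := e1 X Y Z
      have b := e2 X Y Z
      simp only [Pi.smul_apply, Pi.add_apply, betaK, Algebra.smul_def, map_ofNat]
      simp only [wedge12, act1] at a b ⊢
      linear_combination a + b
end
end

section
/- Let M be a QKT-manifold of dimension 4n > 4. Then for any local adapted basis I,J,K the following conditions are equivalent: (1) the almost complex structure I is integrable (N_I = 0); (2) the Lee forms J d*ω_J and K d*ω_K are equal; (3) Jλ_J = Kλ_K; (4) Jγ_J = Kγ_K; (5) Λ_K dω_J = −Λ_J dω_K; (6) JΛ_K dω_I = −KΛ_J dω_I; (7) JΛ_I dω_K = −KΛ_I dω_J. -/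
/-!  Synthetic (Koszul-style) model of an almost quaternion-Hermitian `4n`-manifold.

`C` plays the role of the commutative ℝ-algebra of smooth functions and `V` that of
the `C`-module of vector fields, equipped with a directional derivative `D`, a Lie
bracket, a Riemannian metric `g` together with its Levi-Civita connection `nab`
(characterised by being torsion-free and metric), a local adapted basis `I, J, K`
of anticommuting almost complex structures with `K = I J`, each compatible with the
metric, and a (local) orthonormal frame.  -/

noncomputable section

open scoped BigOperators

section QKTHelpers

set_option linter.unusedSectionVars false

set_option linter.unusedVariables false

/-- a quaternionic triple of skew endomorphisms -/
structure QTri {C V : Type*} [CommRing C] [AddCommGroup V] [Module C V]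
    (g : V →ₗ[C] V →ₗ[C] C) (A B D : V →ₗ[C] V) : Prop where
  AA : ∀ X, A (A X) = -X
  BB : ∀ X, B (B X) = -X
  DD : ∀ X, D (D X) = -X
  AB : ∀ X, A (B X) = D X
  BD : ∀ X, B (D X) = A X
  DA : ∀ X, D (A X) = B X
  BA : ∀ X, B (A X) = -D X
  DB : ∀ X, D (B X) = -A X
  AD : ∀ X, A (D X) = -B X
  sA : ∀ X Y, g (A X) Y = -g X (A Y)
  sB : ∀ X Y, g (B X) Y = -g X (B Y)
  sD : ∀ X Y, g (D X) Y = -g X (D Y)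

theorem QTri.rot {C V : Type*} [CommRing C] [AddCommGroup V] [Module C V]
    {g : V →ₗ[C] V →ₗ[C] C} {A B D : V →ₗ[C] V} (h : QTri g A B D) : QTri g B D A :=
  ⟨h.BB, h.DD, h.AA, h.BD, h.DA, h.AB, h.DB, h.AD, h.BA, h.sB, h.sD, h.sA⟩

/-- an orthonormal frame with respect to `g` -/
structure QFr {C V : Type*} [CommRing C] [AddCommGroup V] [Module C V] (n : ℕ)
    (g : V →ₗ[C] V →ₗ[C] C) (e : Fin (4 * n) → V) : Prop where
  symm : ∀ X Y, g X Y = g Y X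
  one : ∀ i, g (e i) (e i) = 1
  span : ∀ X, X = ∑ i, g X (e i) • e i

section alg

variable {C V : Type*} [CommRing C] [Algebra ℝ C] [AddCommGroup V] [Module C V] {n : ℕ}
  {g : V →ₗ[C] V →ₗ[C] C} {e : Fin (4 * n) → V}

theorem two_cancel {x y : C} (h : 2 * x = 2 * y) : x = y := by
  have h1 : (algebraMap ℝ C (1/2)) * 2 = 1 := by
    have : (2 : C) = algebraMap ℝ C 2 := (map_ofNat _ 2).symm
    rw [this, ← map_mul]; norm_num
  linear_combination (algebraMap ℝ C (1/2)) * h + (y - x) * h1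

theorem QFr.contr (h : QFr n g e) (φ : V →ₗ[C] C) (X : V) :
    ∑ i, φ (e i) * g X (e i) = φ X := by
  conv_rhs => rw [h.span X]
  simp [mul_comm]

theorem QFr.swap (h : QFr n g e) (A : V →ₗ[C] V) (hA : ∀ X Y, g (A X) Y = -g X (A Y))
    (F : V →ₗ[C] V →ₗ[C] C) :
    ∑ i, F (A (e i)) (e i) = -∑ i, F (e i) (A (e i)) := by
  have h1 : ∀ i, F (A (e i)) (e i) = ∑ j, F (e j) (e i) * g (A (e i)) (e j) := by
    intro i
    exact (h.contr (F.flip (e i)) (A (e i))).symm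
  have h2 : ∀ j, F (e j) (A (e j)) = ∑ i, F (e j) (e i) * g (A (e j)) (e i) := by
    intro j
    exact (h.contr (F (e j)) (A (e j))).symm
  rw [Finset.sum_congr rfl fun i _ => h1 i, Finset.sum_congr rfl fun i _ => h2 i,
    Finset.sum_comm, ← Finset.sum_neg_distrib]
  refine Finset.sum_congr rfl fun j _ => ?_
  rw [← Finset.sum_neg_distrib]
  refine Finset.sum_congr rfl fun i _ => ?_
  rw [hA, h.symm (e i)]; ring

theorem QFr.trace0 (h : QFr n g e) (A : V →ₗ[C] V) (hA : ∀ X Y, g (A X) Y = -g X (A Y)) :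
    ∑ i, g (e i) (A (e i)) = 0 := by
  refine Finset.sum_eq_zero fun i _ => ?_
  apply two_cancel
  have := hA (e i) (e i)
  rw [h.symm] at this
  linear_combination this

theorem QFr.trace1 (h : QFr n g e) : ∑ i, g (e i) (e i) = 4 * (n : C) := by
  simp [h.one]

/-- the trace `Σ T(X, e_i, A e_i)` -/
def qtr (e : Fin (4 * n) → V) (T : V →ₗ[C] V →ₗ[C] V →ₗ[C] C) (A : V →ₗ[C] V) (X : V) : C :=
  ∑ i, T X (e i) (A (e i))

theorem qtr_neg (T : V →ₗ[C] V →ₗ[C] V →ₗ[C] C) (A : V →ₗ[C] V) (X : V) :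
    qtr e T A (-X) = -qtr e T A X := by
  simp [qtr]

/-- `Σ T(X, A e, B e) = -Σ T(X, e, B A e)` -/
theorem QFr.swapT (h : QFr n g e) (T : V →ₗ[C] V →ₗ[C] V →ₗ[C] C) (A B : V →ₗ[C] V)
    (hA : ∀ X Y, g (A X) Y = -g X (A Y)) (X : V) :
    ∑ i, T X (A (e i)) (B (e i)) = -∑ i, T X (e i) (B (A (e i))) :=
  h.swap A hA ((T X).compl₂ B)

theorem qtr_rel {A B D : V →ₗ[C] V} (h : QFr n g e) (q : QTri g A B D)
    (T : V →ₗ[C] V →ₗ[C] V →ₗ[C] C)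
    (hL : ∀ X Y Z, T (A X) (A Y) Z + T (A X) Y (A Z) + T X (A Y) (A Z) = T X Y Z) (X : V) :
    qtr e T B X = qtr e T D (A X) := by
  have h0 : qtr e T B X = ∑ i, T (A X) (A (e i)) (B (e i)) + ∑ i, T (A X) (e i) (A (B (e i)))
      + ∑ i, T X (A (e i)) (A (B (e i))) := by
    rw [qtr, ← Finset.sum_add_distrib, ← Finset.sum_add_distrib]
    exact Finset.sum_congr rfl fun i _ => (hL _ _ _).symm
  simp only [q.AB] at h0
  rw [h.swapT T A B q.sA, h.swapT T A D q.sA] at h0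
  simp only [q.BA, q.DA, map_neg, Finset.sum_neg_distrib, neg_neg] at h0
  simp only [qtr] at *
  apply two_cancel
  linear_combination h0

/-- the double contraction of a bilinear form against `ω_A` -/
theorem QFr.dbl (h : QFr n g e) (A : V →ₗ[C] V) (hA : ∀ X Y, g (A X) Y = -g X (A Y))
    (F : V →ₗ[C] V →ₗ[C] C) :
    ∑ i, ∑ j, F (e i) (e j) * g (e i) (A (e j)) = -∑ i, F (e i) (A (e i)) := by
  rw [← h.swap A hA, Finset.sum_comm]
  refine Finset.sum_congr rfl fun j _ => ?_
  refine Eq.trans ?_ (h.contr (F.flip (e j)) (A (e j)))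
  refine Finset.sum_congr rfl fun i _ => ?_
  rw [h.symm (e i)]; rfl

/-- the contraction of `a ∧ ω_B - b ∧ ω_D + T(X,Y,AZ) + T(X,AY,Z) + T(AX,Y,Z)` -/
def qF (g : V →ₗ[C] V →ₗ[C] C) (A B D : V →ₗ[C] V) (T : V →ₗ[C] V →ₗ[C] V →ₗ[C] C)
    (a b : V →ₗ[C] C) (X : V) : V →ₗ[C] V →ₗ[C] C :=
  LinearMap.mk₂ C (fun Y Z =>
    (a X * g Y (B Z) - a Y * g X (B Z) + a Z * g X (B Y))
    - (b X * g Y (D Z) - b Y * g X (D Z) + b Z * g X (D Y))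
    + (T X Y (A Z) + T X (A Y) Z + T (A X) Y Z))
    (by intros; simp; ring) (by intros; simp; ring) (by intros; simp; ring)
    (by intros; simp; ring)

theorem qF_apply (A B D : V →ₗ[C] V) (T : V →ₗ[C] V →ₗ[C] V →ₗ[C] C)
    (a b : V →ₗ[C] C) (X Y Z : V) : qF g A B D T a b X Y Z =
    (a X * g Y (B Z) - a Y * g X (B Z) + a Z * g X (B Y))
    - (b X * g Y (D Z) - b Y * g X (D Z) + b Z * g X (D Y))
    + (T X Y (A Z) + T X (A Y) Z + T (A X) Y Z) := rfl

/-- trace of `ν ∧ ω_B` against `P` -/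
theorem QFr.trw (h : QFr n g e) (B P : V →ₗ[C] V)
    (hB : ∀ X Y, g (B X) Y = -g X (B Y)) (hP : ∀ X Y, g (P X) Y = -g X (P Y))
    (a : V →ₗ[C] C) (X : V) :
    ∑ i, (a X * g (e i) (B (P (e i))) - a (e i) * g X (B (P (e i))) + a (P (e i)) * g X (B (e i)))
      = a X * (∑ i, g (e i) (B (P (e i)))) - 2 * a (P (B X)) := by
  rw [Finset.sum_add_distrib, Finset.sum_sub_distrib, ← Finset.mul_sum]
  have h1 : ∑ i, a (e i) * g X (B (P (e i))) = a (P (B X)) := by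
    rw [← h.contr a (P (B X))]
    refine Finset.sum_congr rfl fun i _ => ?_
    rw [hP, hB]; ring
  have h2 : ∑ i, a (P (e i)) * g X (B (e i)) = - a (P (B X)) := by
    have := h.contr (a.comp P) (B X)
    simp only [LinearMap.comp_apply] at this
    rw [← this, ← Finset.sum_neg_distrib]
    refine Finset.sum_congr rfl fun i _ => ?_
    rw [hB]; ring
  rw [h1, h2]; ring

theorem qF_trB {A B D : V →ₗ[C] V} (h : QFr n g e) (q : QTri g A B D)
    (T : V →ₗ[C] V →ₗ[C] V →ₗ[C] C) (a b : V →ₗ[C] C) (X : V) :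
    ∑ i, qF g A B D T a b X (e i) (B (e i)) =
      -4 * (n : C) * a X + 2 * a X + 2 * b (A X)
        + 2 * qtr e T D X + qtr e T B (A X) := by
  simp only [qF_apply]
  rw [Finset.sum_add_distrib, Finset.sum_sub_distrib, h.trw B B q.sB q.sB, h.trw D B q.sD q.sB,
    Finset.sum_add_distrib, Finset.sum_add_distrib, h.swapT T A B q.sA]
  simp only [q.BB, q.DB, q.AB, q.BA, q.BD, map_neg, Finset.sum_neg_distrib, h.trace1,
    h.trace0 A q.sA, qtr]
  ring

theorem qF_trD {A B D : V →ₗ[C] V} (h : QFr n g e) (q : QTri g A B D)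
    (T : V →ₗ[C] V →ₗ[C] V →ₗ[C] C) (a b : V →ₗ[C] C) (X : V) :
    ∑ i, qF g A B D T a b X (e i) (D (e i)) =
      4 * (n : C) * b X - 2 * b X + 2 * a (A X)
        - 2 * qtr e T B X + qtr e T D (A X) := by
  simp only [qF_apply]
  rw [Finset.sum_add_distrib, Finset.sum_sub_distrib, h.trw B D q.sB q.sD, h.trw D D q.sD q.sD,
    Finset.sum_add_distrib, Finset.sum_add_distrib, h.swapT T A D q.sA]
  simp only [q.BD, q.DD, q.AD, q.DA, q.DB, map_neg, Finset.sum_neg_distrib, h.trace1,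
    h.trace0 A q.sA, qtr]
  ring

/-- the bilinear form `(∇_X ω_A)(Y,Z)` -/
def qG (g : V →ₗ[C] V →ₗ[C] C) (A B D : V →ₗ[C] V) (T : V →ₗ[C] V →ₗ[C] V →ₗ[C] C)
    (a b : V →ₗ[C] C) (X : V) : V →ₗ[C] V →ₗ[C] C :=
  LinearMap.mk₂ C (fun Y Z =>
    a X * g Y (B Z) - b X * g Y (D Z)
    + algebraMap ℝ C (1/2) * (T X Y (A Z) + T X (A Y) Z))
    (by intros; simp; ring) (by intros; simp; ring) (by intros; simp; ring)
    (by intros; simp; ring)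

theorem qG_apply (A B D : V →ₗ[C] V) (T : V →ₗ[C] V →ₗ[C] V →ₗ[C] C)
    (a b : V →ₗ[C] C) (X Y Z : V) : qG g A B D T a b X Y Z =
    a X * g Y (B Z) - b X * g Y (D Z)
    + algebraMap ℝ C (1/2) * (T X Y (A Z) + T X (A Y) Z) := rfl

theorem half_two : (algebraMap ℝ C (1/2)) * 2 = 1 := by
  have : (2 : C) = algebraMap ℝ C 2 := (map_ofNat _ 2).symm
  rw [this, ← map_mul]; norm_num

theorem qG_trB {A B D : V →ₗ[C] V} (h : QFr n g e) (q : QTri g A B D)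
    (T : V →ₗ[C] V →ₗ[C] V →ₗ[C] C) (a b : V →ₗ[C] C) (X : V) :
    ∑ i, qG g A B D T a b X (e i) (B (e i)) = -4 * (n : C) * a X + qtr e T D X := by
  simp only [qG_apply]
  rw [Finset.sum_add_distrib, Finset.sum_sub_distrib, ← Finset.mul_sum, ← Finset.mul_sum,
    ← Finset.mul_sum, Finset.sum_add_distrib, h.swapT T A B q.sA]
  simp only [q.BB, q.DB, q.AB, q.BA, map_neg, Finset.sum_neg_distrib, h.trace1,
    h.trace0 A q.sA, qtr]
  linear_combination (∑ i, T X (e i) (D (e i))) * half_two (C := C)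

/-- divergence -/
theorem qG_div {A B D : V →ₗ[C] V} (h : QFr n g e) (q : QTri g A B D)
    (T : V →ₗ[C] V →ₗ[C] V →ₗ[C] C) (hT1 : ∀ X Y Z, T Y X Z = -T X Y Z)
    (hT2 : ∀ X Y Z, T X Z Y = -T X Y Z) (a b : V →ₗ[C] C) (Z : V) :
    ∑ i, qG g A B D T a b (e i) (e i) Z =
      a (B Z) - b (D Z) + algebraMap ℝ C (1/2) * qtr e T A Z := by
  simp only [qG_apply]
  rw [Finset.sum_add_distrib, Finset.sum_sub_distrib,
    ← Finset.mul_sum, Finset.sum_add_distrib]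
  have h1 : ∑ i, a (e i) * g (e i) (B Z) = a (B Z) := by
    rw [← h.contr a (B Z)]
    exact Finset.sum_congr rfl fun i _ => by rw [h.symm]
  have h2 : ∑ i, b (e i) * g (e i) (D Z) = b (D Z) := by
    rw [← h.contr b (D Z)]
    exact Finset.sum_congr rfl fun i _ => by rw [h.symm]
  have h3 : ∑ i, T (e i) (e i) (A Z) = 0 := by
    refine Finset.sum_eq_zero fun i _ => ?_
    apply two_cancel
    linear_combination hT1 (e i) (e i) (A Z)
  have h4 : ∑ i, T (e i) (A (e i)) Z = qtr e T A Z := by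
    refine Finset.sum_congr rfl fun i _ => ?_
    rw [hT2, hT1]; ring
  rw [h1, h2, h3, h4]; ring

end alg

section geom

variable {n : ℕ} {C V : Type*} [CommRing C] [Algebra ℝ C] [AddCommGroup V] [Module C V]

/-- bundle a linear endomorphism -/
def mkLin {W : Type*} [AddCommGroup W] [Module C W] (A : V → W)
    (hA : ∀ (f : C) X Y, A (f • X + Y) = f • A X + A Y) : V →ₗ[C] W where
  toFun := A
  map_add' X Y := by simpa using hA 1 X Y
  map_smul' f X := by
    have h0 : A 0 = 0 := by simpa using hA 1 0 0
    simpa [h0] using hA f X 0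

theorem mkLin_apply {W : Type*} [AddCommGroup W] [Module C W] (A : V → W)
    (hA : ∀ (f : C) X Y, A (f • X + Y) = f • A X + A Y) (X : V) : mkLin A hA X = A X := rfl

/-- bundle a trilinear form -/
def mkT (T : V → V → V → C) (hT : AQH.IsAlt3 T) (hl : AQH.Lin3 T) :
    V →ₗ[C] V →ₗ[C] V →ₗ[C] C :=
  have h2 : ∀ X (f : C) Y Y' Z, T X (f • Y + Y') Z = f * T X Y Z + T X Y' Z := by
    intro X f Y Y' Z
    rw [hT.1 _ X Z, hl, hT.1 X Y Z, hT.1 X Y' Z]; ring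
  have h3 : ∀ X Y (f : C) Z Z', T X Y (f • Z + Z') = f * T X Y Z + T X Y Z' := by
    intro X Y f Z Z'
    rw [hT.2 X _ Y, h2, hT.2 X Y Z, hT.2 X Y Z']; ring
  mkLin (fun X => mkLin (fun Y => mkLin (fun Z => T X Y Z) (h3 X Y))
      (by intro f Y Y'; ext Z; exact h2 X f Y Y' Z))
    (by intro f X X'; ext Y Z; exact hl f X X' Y Z)

theorem mkT_apply (T : V → V → V → C) (hT : AQH.IsAlt3 T) (hl : AQH.Lin3 T) (X Y Z : V) :
    mkT T hT hl X Y Z = T X Y Z := rfl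

variable (M : AQH n C V)

/-- the bundled metric -/
def mkG : V →ₗ[C] V →ₗ[C] C :=
  LinearMap.mk₂ C M.g M.g_add M.g_smul
    (fun X Y Z => by rw [M.g_symm, M.g_add, M.g_symm Y, M.g_symm Z])
    (fun f X Y => by rw [M.g_symm, M.g_smul, M.g_symm Y]; rfl)

theorem mkG_apply (X Y : V) : mkG M X Y = M.g X Y := rfl

theorem mkG_fr : QFr n (mkG M) M.frame where
  symm := M.g_symm
  one i := by simp [mkG_apply, M.frame_orthonormal]
  span := M.frame_span

theorem mkG_tri : QTri (mkG M) (mkLin M.I M.I_lin) (mkLin M.J M.J_lin) (mkLin M.K M.K_lin) := by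
  have nI : ∀ X, M.I (-X) = -M.I X := fun X => map_neg (mkLin M.I M.I_lin) X
  have gn : ∀ X Y, M.g X (-Y) = -M.g X Y := fun X Y => map_neg (mkG M X) Y
  have gn1 : ∀ X Y, M.g (-X) Y = -M.g X Y := fun X Y => by
    rw [M.g_symm, gn, M.g_symm]
  have ji : ∀ X, M.J (M.I X) = -M.I (M.J X) := fun X => by rw [M.anticomm, neg_neg]
  have sI : ∀ X Y, M.g (M.I X) Y = -M.g X (M.I Y) := fun X Y => by
    rw [← M.I_metric, M.I_sq, gn1]
  have sJ : ∀ X Y, M.g (M.J X) Y = -M.g X (M.J Y) := fun X Y => by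
    rw [← M.J_metric, M.J_sq, gn1]
  constructor <;> intro X <;> (try intro Y) <;>
    simp only [mkLin_apply, mkG_apply, M.K_def, ji, nI, M.I_sq, M.J_sq, neg_neg, sI, sJ, gn]

theorem nondeg {v : V} (h : ∀ W, M.g W v = 0) : v = 0 := by
  rw [M.frame_span v]
  exact Finset.sum_eq_zero fun i _ => by rw [M.g_symm, h, zero_smul]

theorem Tvec_g (T : V →ₗ[C] V →ₗ[C] V →ₗ[C] C) (W X Y : V) :
    M.g W (M.Tvec (fun X Y Z => T X Y Z) X Y) = T W X Y := by
  refine Eq.trans ?_ ((mkG_fr M).contr ((T.flip X).flip Y) W)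
  rw [← mkG_apply, AQH.Tvec, map_sum]
  exact Finset.sum_congr rfl fun i _ => by simp

variable [Module ℝ V] [IsScalarTower ℝ C V]

theorem nab2_eq {A B D : V →ₗ[C] V} (q : QTri (mkG M) A B D)
    (T : V →ₗ[C] V →ₗ[C] V →ₗ[C] C) (hT1 : ∀ X Y Z, T Y X Z = -T X Y Z) (a b : V →ₗ[C] C)
    (hq : ∀ X Y, M.nabT (fun X Y Z => T X Y Z) X (A Y) - A (M.nabT (fun X Y Z => T X Y Z) X Y)
      = a X • B Y - b X • D Y) (X Y Z : V) :
    M.nab2 (M.omega A) X Y Z = qG (mkG M) A B D T a b X Y Z := by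
  have h1 := congrArg (mkG M Y) (hq X Z)
  simp only [AQH.nabT, ← algebraMap_smul C (1/2:ℝ), map_sub, map_add, map_smul, smul_eq_mul] at h1
  have h2 := q.sA Y (M.Tvec (fun X Y Z => T X Y Z) X Z)
  simp only [mkG_apply, Tvec_g] at h1 h2
  rw [qG_apply, AQH.nab2, AQH.omega, M.nab_metric]
  simp only [AQH.omega, mkG_apply]
  rw [hT1 X Y, hT1 X (A Y)] at *
  linear_combination h1 + (algebraMap ℝ C (1/2)) * h2

theorem d2_eq {A B D : V →ₗ[C] V} (q : QTri (mkG M) A B D)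
    (T : V →ₗ[C] V →ₗ[C] V →ₗ[C] C) (hT1 : ∀ X Y Z, T Y X Z = -T X Y Z)
    (hT2 : ∀ X Y Z, T X Z Y = -T X Y Z) (a b : V →ₗ[C] C)
    (hq : ∀ X Y, M.nabT (fun X Y Z => T X Y Z) X (A Y) - A (M.nabT (fun X Y Z => T X Y Z) X Y)
      = a X • B Y - b X • D Y) (X Y Z : V) :
    M.d2 (M.omega A) X Y Z = qF (mkG M) A B D T a b X Y Z := by
  have sk : ∀ X Y, M.omega A X Y = -M.omega A Y X := fun X Y => by
    rw [AQH.omega, AQH.omega, M.g_symm X]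
    exact q.sA Y X
  have sb : ∀ X Y Z, M.omega A (X - Y) Z = M.omega A X Z - M.omega A Y Z := fun X Y Z => by
    show mkG M (X - Y) (A Z) = _
    rw [map_sub]; rfl
  have h0 : M.d2 (M.omega A) X Y Z = M.nab2 (M.omega A) X Y Z - M.nab2 (M.omega A) Y X Z
      + M.nab2 (M.omega A) Z X Y := by
    simp only [AQH.d2, AQH.nab2, ← M.torsion_free, sb]
    rw [sk X (M.nab Y Z), sk Y (M.nab X Z), sk X (M.nab Z Y)]
    rw [sk (M.nab Z X) Y]
    ring
  rw [h0, nab2_eq M q T hT1 a b hq, nab2_eq M q T hT1 a b hq, nab2_eq M q T hT1 a b hq,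
    qF_apply, qG_apply, qG_apply, qG_apply]
  linear_combination (T X Y (A Z) + T X (A Y) Z + T (A X) Y Z) * half_two (C := C)
    + algebraMap ℝ C (1/2) * (-hT1 X Y (A Z) - hT1 (A X) Y Z + hT1 X Z (A Y) - hT2 X (A Y) Z
      + hT1 (A X) Z Y - hT2 (A X) Y Z)

theorem Lam_eq {A : V →ₗ[C] V} (hA : ∀ X Y, mkG M (A X) Y = -mkG M X (A Y))
    (β : V → V → V → C) (X : V) (F : V →ₗ[C] V →ₗ[C] C) (hF : ∀ Y Z, β X Y Z = F Y Z) :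
    M.Lam A β X = algebraMap ℝ C (1/2) * -∑ i, F (M.frame i) (A (M.frame i)) := by
  rw [← (mkG_fr M).dbl A hA F, AQH.Lam, Algebra.smul_def]
  simp only [hF]
  rfl

theorem inner2_eq {A : V →ₗ[C] V} (hA : ∀ X Y, mkG M (A X) Y = -mkG M X (A Y))
    (β : V → V → C) (F : V →ₗ[C] V →ₗ[C] C) (hF : ∀ Y Z, β Y Z = F Y Z) :
    M.inner2 β (M.omega A) = algebraMap ℝ C (1/2) * -∑ i, F (M.frame i) (A (M.frame i)) :=
  Lam_eq M hA (fun _ => β) 0 F hF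

theorem gam_lin (hn : 1 < n) {A B D : V →ₗ[C] V} (q : QTri (mkG M) A B D)
    (T : V →ₗ[C] V →ₗ[C] V →ₗ[C] C) (a b : V → C)
    (hq : ∀ X Y, M.nabT (fun X Y Z => T X Y Z) X (A Y) - A (M.nabT (fun X Y Z => T X Y Z) X Y)
      = a X • B Y - b X • D Y) : AQH.Lin1 a := by
  let e0 := M.frame ⟨0, by omega⟩
  have ee : mkG M e0 e0 = 1 := (mkG_fr M).one _
  have z : mkG M e0 (A e0) = 0 := by
    apply two_cancel
    have := q.sA e0 e0
    rw [(mkG_fr M).symm] at this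
    linear_combination this
  have ha : ∀ X, a X = mkG M (B e0) (M.nabT (fun X Y Z => T X Y Z) X (A e0)
      - A (M.nabT (fun X Y Z => T X Y Z) X e0)) := by
    intro X
    rw [hq]
    simp only [map_sub, map_smul, q.sB, q.BB, q.BD, map_neg, ee, z, smul_eq_mul]
    ring
  have tl : ∀ (f : C) X X' Y, M.nabT (fun X Y Z => T X Y Z) (f • X + X') Y =
      f • M.nabT (fun X Y Z => T X Y Z) X Y + M.nabT (fun X Y Z => T X Y Z) X' Y := by
    intro f X X' Y
    simp only [AQH.nabT, ← algebraMap_smul C (1/2:ℝ), M.nab_addX, M.nab_smulX]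
    have : M.Tvec (fun X Y Z => T X Y Z) (f • X + X') Y =
        f • M.Tvec (fun X Y Z => T X Y Z) X Y + M.Tvec (fun X Y Z => T X Y Z) X' Y := by
      simp only [AQH.Tvec, Finset.smul_sum, ← Finset.sum_add_distrib]
      refine Finset.sum_congr rfl fun i _ => ?_
      simp [add_smul, mul_smul]
    rw [this]
    module
  intro f X X'
  rw [ha, ha X, ha X', tl, tl]
  simp only [map_add, map_sub, map_smul, smul_eq_mul]
  ring

/-- formula for the Nijenhuis tensor -/
theorem nij_eq {A B D : V →ₗ[C] V} (q : QTri (mkG M) A B D)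
    (T : V →ₗ[C] V →ₗ[C] V →ₗ[C] C) (hT1 : ∀ X Y Z, T Y X Z = -T X Y Z)
    (hT2 : ∀ X Y Z, T X Z Y = -T X Y Z)
    (hL : ∀ X Y Z, T (A X) (A Y) Z + T (A X) Y (A Z) + T X (A Y) (A Z) = T X Y Z)
    (a b : V →ₗ[C] C)
    (hq : ∀ X Y, M.nabT (fun X Y Z => T X Y Z) X (A Y) - A (M.nabT (fun X Y Z => T X Y Z) X Y)
      = a X • B Y - b X • D Y) (X Y : V) :
    M.nijV A X Y = (b X - a (A X)) • B Y + (b (A X) + a X) • D Y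
      - ((b Y - a (A Y)) • B X + (b (A Y) + a Y) • D X) := by
  set U := M.nabT (fun X Y Z => T X Y Z) with hU
  set S := M.Tvec (fun X Y Z => T X Y Z) with hS
  have ss : ∀ X Y, S Y X = -S X Y := by
    intro X Y
    rw [← sub_eq_zero]
    apply nondeg M
    intro W
    rw [← mkG_apply, map_sub, map_neg, mkG_apply, mkG_apply, hS, Tvec_g, Tvec_g, hT2 W X Y]
    ring
  have hb : ∀ X Y, M.bracket X Y = U X Y - U Y X - S X Y := by
    intro X Y
    have h2 : (algebraMap ℝ C (1/2)) • S X Y + (algebraMap ℝ C (1/2)) • S X Y = S X Y := by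
      rw [← add_smul, ← mul_two, half_two, one_smul]
    rw [← M.torsion_free, hU]
    simp only [AQH.nabT, ← algebraMap_smul C (1/2:ℝ)]
    rw [← hS, ss X Y]
    nth_rewrite 3 [← h2]
    module
  have hS0 : S X Y + A (S (A X) Y) + A (S X (A Y)) - S (A X) (A Y) = 0 := by
    apply nondeg M
    intro W
    have f1 := q.sA W (S (A X) Y)
    have f2 := q.sA W (S X (A Y))
    rw [← mkG_apply, map_sub, map_add, map_add]
    simp only [mkG_apply, hS, Tvec_g] at *
    linear_combination f1 + f2 - hL W X Y
  have hUA : ∀ X Y, U X (A Y) = A (U X Y) + (a X • B Y - b X • D Y) := by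
    intro X Y
    rw [← hq]; abel
  rw [AQH.nijV]
  simp only [hb, hUA, map_sub, map_add, map_smul, q.AA, q.AB, q.AD]
  refine Eq.trans ?_ ((congrArg (fun v => _ - v) hS0).trans (sub_zero _))
  module

theorem cancelR {r : ℝ} (hr : r ≠ 0) {x : C} : algebraMap ℝ C r * x = 0 ↔ x = 0 := by
  rw [← Algebra.smul_def, smul_eq_zero]
  simp [hr]

/-- vanishing of the Nijenhuis tensor -/
theorem nij_iff (hn : 1 < n) {A B D : V →ₗ[C] V} (q : QTri (mkG M) A B D)
    (s : V →ₗ[C] C)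
    (h : ∀ X Y, s X • B Y + s (A X) • D Y - (s Y • B X + s (A Y) • D X) = 0) (X : V) :
    s X = 0 := by
  have fr := mkG_fr M
  have h1 : ∀ i, s X * mkG M (M.frame i) (M.frame i)
      + s (A X) * mkG M (M.frame i) (A (M.frame i))
      - s (M.frame i) * mkG M X (M.frame i)
      + s (A (M.frame i)) * mkG M (A X) (M.frame i) = 0 := by
    intro i
    have := congrArg (fun v => mkG M v (B (M.frame i))) (h X (M.frame i))
    simp only [map_sub, map_add, map_smul, LinearMap.sub_apply, LinearMap.add_apply,
      LinearMap.smul_apply, smul_eq_mul, map_zero, LinearMap.zero_apply, q.sB, q.sD,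
      q.BB, q.DB, map_neg, neg_neg] at this
    rw [q.sA]
    linear_combination this
  have h2 := Finset.sum_eq_zero fun i (_ : i ∈ Finset.univ) => h1 i
  rw [Finset.sum_add_distrib, Finset.sum_sub_distrib, Finset.sum_add_distrib, ← Finset.mul_sum,
    ← Finset.mul_sum, fr.trace1, fr.trace0 A q.sA, fr.contr s X] at h2
  have h3 := fr.contr (s.comp A) (A X)
  simp only [LinearMap.comp_apply] at h3
  rw [h3, q.AA, map_neg] at h2
  have hr : (4 * (n:ℝ) - 2) ≠ 0 := by
    have : (1:ℝ) < n := by exact_mod_cast hn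
    linarith
  rw [← cancelR (C := C) hr]
  simp only [map_sub, map_mul, map_natCast, map_ofNat]
  linear_combination h2

/-- formula for the one-forms `λ` -/
theorem lam_eq {A B D : V →ₗ[C] V} (q : QTri (mkG M) A B D)
    (T : V →ₗ[C] V →ₗ[C] V →ₗ[C] C) (hT1 : ∀ X Y Z, T Y X Z = -T X Y Z) (a b : V →ₗ[C] C)
    (hq : ∀ X Y, M.nabT (fun X Y Z => T X Y Z) X (A Y) - A (M.nabT (fun X Y Z => T X Y Z) X Y)
      = a X • B Y - b X • D Y) (X : V) :
    (1/(2*(n:ℝ))) • M.inner2 (fun Y Z => M.nab2 (M.omega A) X Y Z) (M.omega B) =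
      algebraMap ℝ C (1/(2*(n:ℝ))) * (algebraMap ℝ C (1/2) *
        (4 * (n : C) * a X - qtr M.frame T D X)) := by
  rw [inner2_eq M q.sB _ _ (nab2_eq M q T hT1 a b hq X), qG_trB (mkG_fr M) q, Algebra.smul_def]
  ring

theorem cod_eq {A B D : V →ₗ[C] V} (q : QTri (mkG M) A B D)
    (T : V →ₗ[C] V →ₗ[C] V →ₗ[C] C) (hT1 : ∀ X Y Z, T Y X Z = -T X Y Z)
    (hT2 : ∀ X Y Z, T X Z Y = -T X Y Z) (a b : V →ₗ[C] C)
    (hq : ∀ X Y, M.nabT (fun X Y Z => T X Y Z) X (A Y) - A (M.nabT (fun X Y Z => T X Y Z) X Y)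
      = a X • B Y - b X • D Y) (Z : V) :
    M.codiff2 (M.omega A) Z =
      -(a (B Z) - b (D Z) + algebraMap ℝ C (1/2) * qtr M.frame T A Z) := by
  rw [AQH.codiff2, ← qG_div (mkG_fr M) q T hT1 hT2]
  simp only [nab2_eq M q T hT1 a b hq]

theorem LamB_eq {A B D : V →ₗ[C] V} (q : QTri (mkG M) A B D)
    (T : V →ₗ[C] V →ₗ[C] V →ₗ[C] C) (hT1 : ∀ X Y Z, T Y X Z = -T X Y Z)
    (hT2 : ∀ X Y Z, T X Z Y = -T X Y Z) (a b : V →ₗ[C] C)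
    (hq : ∀ X Y, M.nabT (fun X Y Z => T X Y Z) X (A Y) - A (M.nabT (fun X Y Z => T X Y Z) X Y)
      = a X • B Y - b X • D Y) (X : V) :
    M.Lam B (M.d2 (M.omega A)) X = algebraMap ℝ C (1/2) * -(-4 * (n : C) * a X + 2 * a X
      + 2 * b (A X) + 2 * qtr M.frame T D X + qtr M.frame T B (A X)) := by
  rw [Lam_eq M q.sB _ X _ (d2_eq M q T hT1 hT2 a b hq X), qF_trB (mkG_fr M) q]

theorem LamD_eq {A B D : V →ₗ[C] V} (q : QTri (mkG M) A B D)
    (T : V →ₗ[C] V →ₗ[C] V →ₗ[C] C) (hT1 : ∀ X Y Z, T Y X Z = -T X Y Z)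
    (hT2 : ∀ X Y Z, T X Z Y = -T X Y Z) (a b : V →ₗ[C] C)
    (hq : ∀ X Y, M.nabT (fun X Y Z => T X Y Z) X (A Y) - A (M.nabT (fun X Y Z => T X Y Z) X Y)
      = a X • B Y - b X • D Y) (X : V) :
    M.Lam D (M.d2 (M.omega A)) X = algebraMap ℝ C (1/2) * -(4 * (n : C) * b X - 2 * b X
      + 2 * a (A X) - 2 * qtr M.frame T B X + qtr M.frame T D (A X)) := by
  rw [Lam_eq M q.sD _ X _ (d2_eq M q T hT1 hT2 a b hq X), qF_trD (mkG_fr M) q]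

end geom

end QKTHelpers

open AQH in
/-- Let `M` be a QKT-manifold of dimension `4n > 4` with
torsion three-form `T` and associated one-forms `γ_A`.  For the local adapted
basis `I, J, K` the following are equivalent:
(1) `I` is integrable (`N_I = 0`); (2) `J d*ω_J = K d*ω_K`; (3) `Jλ_J = Kλ_K`;
(4) `Jγ_J = Kγ_K`; (5) `Λ_K dω_J = -Λ_J dω_K`; (6) `JΛ_K dω_I = -KΛ_J dω_I`;
(7) `JΛ_I dω_K = -KΛ_I dω_J`. -/
theorem statement19 {n : ℕ} {C V : Type*} [CommRing C] [Algebra ℝ C] [AddCommGroup V]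
    [Module C V] [Module ℝ V] [IsScalarTower ℝ C V]
    (hn : 1 < n) (M : AQH n C V)
    (T : V → V → V → C) (γI γJ γK : V → C)
    (hTalt : AQH.IsAlt3 T) (hTlin : AQH.Lin3 T)
    (hTtype : calL M.I T = T ∧ calL M.J T = T ∧ calL M.K T = T)
    (hTmetric : M.MetricConn (M.nabT T))
    (hTquat : M.QuatConn (M.nabT T) γI γJ γK) :
    [ (∀ X Y, M.nijV M.I X Y = 0),
      act1 M.J (M.codiff2 (M.omega M.J)) = act1 M.K (M.codiff2 (M.omega M.K)),
      act1 M.J M.lambdaJ = act1 M.K M.lambdaK,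
      act1 M.J γJ = act1 M.K γK,
      M.Lam M.K (M.d2 (M.omega M.J)) = -M.Lam M.J (M.d2 (M.omega M.K)),
      act1 M.J (M.Lam M.K (M.d2 (M.omega M.I)))
        = -act1 M.K (M.Lam M.J (M.d2 (M.omega M.I))),
      act1 M.J (M.Lam M.I (M.d2 (M.omega M.K)))
        = -act1 M.K (M.Lam M.I (M.d2 (M.omega M.J))) ].TFAE := by
  obtain ⟨hLI, hLJ, hLK⟩ := hTtype
  obtain ⟨hqI, hqJ, hqK⟩ := hTquat
  have q := mkG_tri M
  have fr := mkG_fr M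
  have lI : AQH.Lin1 γI := gam_lin M hn q.rot (mkT T hTalt hTlin) γI γK hqJ
  have lJ : AQH.Lin1 γJ := gam_lin M hn q.rot.rot (mkT T hTalt hTlin) γJ γI hqK
  have lK : AQH.Lin1 γK := gam_lin M hn q (mkT T hTalt hTlin) γK γJ hqI
  have LI : ∀ X Y Z, T (M.I X) (M.I Y) Z + T (M.I X) Y (M.I Z) + T X (M.I Y) (M.I Z) = T X Y Z :=
    fun X Y Z => congrFun (congrFun (congrFun hLI X) Y) Z
  have LJ : ∀ X Y Z, T (M.J X) (M.J Y) Z + T (M.J X) Y (M.J Z) + T X (M.J Y) (M.J Z) = T X Y Z :=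
    fun X Y Z => congrFun (congrFun (congrFun hLJ X) Y) Z
  have LK : ∀ X Y Z, T (M.K X) (M.K Y) Z + T (M.K X) Y (M.K Z) + T X (M.K Y) (M.K Z) = T X Y Z :=
    fun X Y Z => congrFun (congrFun (congrFun hLK X) Y) Z
  obtain ⟨IL, hIL⟩ : ∃ A : V →ₗ[C] V, A = mkLin M.I M.I_lin := ⟨_, rfl⟩
  obtain ⟨JL, hJL⟩ : ∃ A : V →ₗ[C] V, A = mkLin M.J M.J_lin := ⟨_, rfl⟩
  obtain ⟨KL, hKL⟩ : ∃ A : V →ₗ[C] V, A = mkLin M.K M.K_lin := ⟨_, rfl⟩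
  obtain ⟨TL, hTL⟩ : ∃ A, A = mkT T hTalt hTlin := ⟨_, rfl⟩
  obtain ⟨a, ha⟩ : ∃ A : V →ₗ[C] C, A = mkLin γI lI := ⟨_, rfl⟩
  obtain ⟨b, hb⟩ : ∃ A : V →ₗ[C] C, A = mkLin γJ lJ := ⟨_, rfl⟩
  obtain ⟨c, hc⟩ : ∃ A : V →ₗ[C] C, A = mkLin γK lK := ⟨_, rfl⟩
  have cI : M.I = IL := by rw [hIL]; rfl
  have cJ : M.J = JL := by rw [hJL]; rfl
  have cK : M.K = KL := by rw [hKL]; rfl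
  have cT : T = fun X Y Z => TL X Y Z := by rw [hTL]; rfl
  have ca : γI = a := by rw [ha]; rfl
  have cb : γJ = b := by rw [hb]; rfl
  have cc : γK = c := by rw [hc]; rfl
  rw [← hIL, ← hJL, ← hKL] at q
  have hT1 : ∀ X Y Z, TL Y X Z = -TL X Y Z := by rw [hTL]; exact hTalt.1
  have hT2 : ∀ X Y Z, TL X Z Y = -TL X Y Z := by rw [hTL]; exact hTalt.2
  clear lI lJ lK ha hb hc hTL hIL hJL hKL hTmetric hTlin hTalt hLI hLJ hLK
  simp only [AQH.lambdaJ, AQH.lambdaK, act1, funext_iff, Pi.neg_apply]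
  simp only [AQH.lambdaJ, AQH.lambdaK, cI, cJ, cK, ca, cb, cc] at *
  subst cT
  have tJ := qtr_rel fr q TL LI
  have tK := qtr_rel fr q.rot TL LJ
  have tI := qtr_rel fr q.rot.rot TL LK
  have hr1 : (2 * (n:ℝ) - 1) ≠ 0 := by
    have : (1:ℝ) < n := by exact_mod_cast hn
    linarith
  have hr2 : (2 * (n:ℝ) - 2) ≠ 0 := by
    have : (1:ℝ) < n := by exact_mod_cast hn
    linarith
  have hn0 : (n:ℝ) ≠ 0 := by
    have : (1:ℝ) < n := by exact_mod_cast hn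
    linarith
  have hcn : algebraMap ℝ C (1/(2*(n:ℝ))) * (2 * (n:C)) = 1 := by
    have : (2 * (n:C)) = algebraMap ℝ C (2 * n) := by simp only [map_mul, map_natCast, map_ofNat]
    rw [this, ← map_mul, one_div_mul_cancel (by positivity), map_one]
  have h2 := half_two (C := C)
  have key : ∀ (r : ℝ), r ≠ 0 → ∀ f g : V → C,
      (∀ X, f X - g X = algebraMap ℝ C r * (b (JL X) - c (KL X))) →
      ((∀ X, f X = g X) ↔ ∀ X, b (JL X) - c (KL X) = 0) := by
    intro r hr f g h
    refine forall_congr' fun X => ?_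
    rw [← sub_eq_zero, h, cancelR hr]
  have e4 : (∀ X, -b (JL X) = -c (KL X)) ↔ ∀ X, b (JL X) - c (KL X) = 0 :=
    key (-1) (by norm_num) _ _ fun X => by rw [map_neg, map_one]; ring
  have e3 := key (-1) (by norm_num)
    (fun X => -((1/(2*(n:ℝ))) • M.inner2 (fun Y Z => M.nab2 (M.omega KL) (JL X) Y Z) (M.omega IL)))
    (fun X => -((1/(2*(n:ℝ))) • M.inner2 (fun Y Z => M.nab2 (M.omega IL) (KL X) Y Z) (M.omega JL)))
    (fun X => by
      have h1 := lam_eq M q.rot.rot TL hT1 b a hqK (JL X)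
      have h3 := lam_eq M q TL hT1 c b hqI (KL X)
      simp only [h1, h3, tJ, q.AB, map_neg, map_one]
      linear_combination (-(b (JL X) - c (KL X))) *
        (algebraMap ℝ C (1/2) * 2 * hcn + h2))
  have e2 := key 1 (by norm_num) (fun X => -M.codiff2 (M.omega JL) (JL X))
    (fun X => -M.codiff2 (M.omega KL) (KL X))
    (fun X => by
      have h1 := cod_eq M q.rot TL hT1 hT2 a c hqJ (JL X)
      have h3 := cod_eq M q.rot.rot TL hT1 hT2 b a hqK (KL X)
      simp only [h1, h3, tJ, q.AB, q.DB, q.AD, q.BD, map_neg, map_one]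
      ring)
  have e5 : (∀ X, M.Lam KL (M.d2 (M.omega JL)) X = -M.Lam JL (M.d2 (M.omega KL)) X) ↔
      ∀ X, b (JL X) - c (KL X) = 0 := by
    have h : ∀ X, M.Lam KL (M.d2 (M.omega JL)) X - -M.Lam JL (M.d2 (M.omega KL)) X
        = b (JL (IL X)) - c (KL (IL X)) := by
      intro X
      have h1 := LamB_eq M q.rot TL hT1 hT2 a c hqJ X
      have h3 := LamD_eq M q.rot.rot TL hT1 hT2 b a hqK X
      have t1 := tK (JL X)
      have t2 := tI X
      rw [q.BB, qtr_neg] at t1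
      simp only [h1, h3, t1, ← t2, q.BA, q.DA, map_neg]
      linear_combination (-c (JL X) - b (KL X)) * h2
    constructor
    · intro H X
      have := h (-IL X)
      rw [H, sub_self] at this
      simpa only [map_neg, q.AA, neg_neg] using this.symm
    · intro H X
      rw [← sub_eq_zero, h, H]
  have e6 := key (2 * (n:ℝ) - 2) hr2 (fun X => -M.Lam KL (M.d2 (M.omega IL)) (JL X))
    (fun X => - -M.Lam JL (M.d2 (M.omega IL)) (KL X))
    (fun X => by
      have h1 := LamD_eq M q TL hT1 hT2 c b hqI (JL X)
      have h3 := LamB_eq M q TL hT1 hT2 c b hqI (KL X)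
      simp only [h1, h3, tJ, q.AB, q.AD, q.AA, map_neg, map_sub, map_mul, map_ofNat, map_natCast,
        qtr_neg]
      linear_combination ((2 * (n:C) - 2) * (b (JL X) - c (KL X))) * h2)
  have e7 := key (-(2 * (n:ℝ) - 1)) (neg_ne_zero.mpr hr1)
    (fun X => -M.Lam IL (M.d2 (M.omega KL)) (JL X))
    (fun X => - -M.Lam IL (M.d2 (M.omega JL)) (KL X))
    (fun X => by
      have h1 := LamB_eq M q.rot.rot TL hT1 hT2 b a hqK (JL X)
      have h3 := LamD_eq M q.rot TL hT1 hT2 a c hqJ (KL X)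
      simp only [h1, h3, tJ, q.AB, q.DB, q.BD, map_neg, map_sub, map_mul, map_ofNat, map_natCast,
        map_one, qtr_neg]
      linear_combination (-(2 * (n:C) - 1) * (b (JL X) - c (KL X))) * h2)
  have e1 : (∀ X Y, M.nijV IL X Y = 0) ↔ ∀ X, b (JL X) - c (KL X) = 0 := by
    have hN := nij_eq M q TL hT1 hT2 LI c b hqI
    constructor
    · intro H X
      have := nij_iff M hn q (b - c.comp IL) (fun X Y => by
        rw [← H X Y, hN]
        simp only [LinearMap.sub_apply, LinearMap.comp_apply, q.AA, map_neg, sub_neg_eq_add])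
        (JL X)
      simpa only [LinearMap.sub_apply, LinearMap.comp_apply, q.AB] using this
    · intro H X Y
      have s1 : ∀ X, b X - c (IL X) = 0 := fun X => by
        have := H (-JL X)
        simpa only [map_neg, q.BB, q.DB, neg_neg] using this
      have s2 : ∀ X, b (IL X) + c X = 0 := fun X => by
        have := s1 (IL X)
        simpa only [q.AA, map_neg, sub_neg_eq_add] using this
      rw [hN]
      simp only [s1, s2, zero_smul, add_zero, sub_zero]
  tfae_have 1 ↔ 4 := e1.trans e4.symm
  tfae_have 2 ↔ 4 := e2.trans e4.symm
  tfae_have 3 ↔ 4 := e3.trans e4.symm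
  tfae_have 5 ↔ 4 := e5.trans e4.symm
  tfae_have 6 ↔ 4 := e6.trans e4.symm
  tfae_have 7 ↔ 4 := e7.trans e4.symm
  tfae_finish
end
end
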